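/- arXiv:2209.14979 — 13 statements merged into one kernel-verified Lean document; each statement's English description precedes it below -/
import Mathlib

section
/- Let Spin(9) be the subgroup of the group of ℝ-linear automorphisms of 𝕆 ⊕ 𝕆 generated by the operators g_{r,x}(y₀, y₁) := (r·y₀ + y₁x, y₀x̄ − r·y₁), where r ∈ ℝ, x ∈ 𝕆 and r² + ‖x‖² = 1. Then every element of Spin(9) is a linear isometry of 𝕆 ⊕ 𝕆 (with the direct-sum inner product), and Spin(9) acts transitively on the unit sphere: for all p, q ∈ 𝕆 ⊕ 𝕆 with ‖p‖ = ‖q‖ = 1 there exists g ∈ Spin(9) with g(p) = q. -/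
open scoped InnerProductSpace

/-- Every element of `Spin(9)` (the subgroup of linear automorphisms of
`𝕆 ⊕ 𝕆` generated by the operators `g_{r,x}(y₀,y₁) = (r • y₀ + y₁ x, y₀ x̄ - r • y₁)` with
`r² + ‖x‖² = 1`) is a linear isometry of `𝕆 ⊕ 𝕆` with the direct-sum inner product, and
`Spin(9)` acts transitively on the unit sphere of `𝕆 ⊕ 𝕆`. -/
theorem spin9_isometry_and_transitive
    {O : Type*} [NormedAddCommGroup O] [InnerProductSpace ℝ O]
    (hdim : Module.finrank ℝ O = 8)
    (mul : O →ₗ[ℝ] O →ₗ[ℝ] O) (e : O) (he : ‖e‖ = 1)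
    (unit_left : ∀ x : O, mul e x = x) (unit_right : ∀ x : O, mul x e = x)
    (norm_mul : ∀ x y : O, ‖mul x y‖ = ‖x‖ * ‖y‖)
    (conj : O → O) (hconj : ∀ x : O, conj x = (2 * ⟪x, e⟫_ℝ) • e - x)
    (Spin9 : Subgroup ((O × O) ≃ₗ[ℝ] (O × O)))
    (hSpin9 : Spin9 = Subgroup.closure
      {g : (O × O) ≃ₗ[ℝ] (O × O) | ∃ (r : ℝ) (x : O), r ^ 2 + ‖x‖ ^ 2 = 1 ∧
        ∀ y : O × O, g y = (r • y.1 + mul y.2 x, mul y.1 (conj x) - r • y.2)}) :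
    (∀ g ∈ Spin9, ∀ p q : O × O,
      ⟪(g p).1, (g q).1⟫_ℝ + ⟪(g p).2, (g q).2⟫_ℝ = ⟪p.1, q.1⟫_ℝ + ⟪p.2, q.2⟫_ℝ) ∧
    (∀ p q : O × O, ‖p.1‖ ^ 2 + ‖p.2‖ ^ 2 = 1 → ‖q.1‖ ^ 2 + ‖q.2‖ ^ 2 = 1 →
      ∃ g ∈ Spin9, g p = q) := by
  have : FiniteDimensional ℝ O := Module.finite_of_finrank_pos (by omega)
  -- polarization in the first argument
  have p1 : ∀ a c b : O, ⟪mul a b, mul c b⟫_ℝ = ⟪a, c⟫_ℝ * ‖b‖ ^ 2 := by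
    intro a c b
    have h1 := norm_add_sq_real (mul a b) (mul c b)
    have h2 := norm_add_sq_real a c
    rw [← LinearMap.add_apply, ← map_add, norm_mul, norm_mul, norm_mul, mul_pow, h2] at h1
    linarith
  have p2 : ∀ a b c d : O, ⟪mul a b, mul c d⟫_ℝ + ⟪mul a d, mul c b⟫_ℝ
      = 2 * ⟪a, c⟫_ℝ * ⟪b, d⟫_ℝ := by
    intro a b c d
    have h1 := p1 a c (b + d)
    have h2 := norm_add_sq_real b d
    have h3 := p1 a c b
    have h4 := p1 a c d
    rw [map_add, map_add, inner_add_left, inner_add_right, inner_add_right, h2] at h1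
    linarith
  have adj : ∀ a b c : O, ⟪mul a (conj b), c⟫_ℝ = ⟪a, mul c b⟫_ℝ := by
    intro a b c
    have h := p2 a b c e
    rw [unit_right, unit_right] at h
    rw [hconj, map_sub, map_smul, unit_right, inner_sub_left, real_inner_smul_left]
    linarith
  have adj' : ∀ a b c : O, ⟪c, mul a (conj b)⟫_ℝ = ⟪mul c b, a⟫_ℝ := by
    intro a b c
    rw [real_inner_comm, adj, real_inner_comm]
  have hee : ⟪e, e⟫_ℝ = 1 := by rw [real_inner_self_eq_norm_sq, he]; norm_num
  have cc : ∀ x, conj (conj x) = x := by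
    intro x
    rw [hconj (conj x), hconj x, inner_sub_left, real_inner_smul_left, hee]
    module
  have nc : ∀ x, ‖conj x‖ ^ 2 = ‖x‖ ^ 2 := by
    intro x
    rw [hconj x, norm_sub_sq_real, norm_smul, he, real_inner_smul_left, real_inner_comm x e,
      mul_one, Real.norm_eq_abs, sq_abs]
    ring
  have iso : ∀ (r : ℝ) (x : O), r ^ 2 + ‖x‖ ^ 2 = 1 → ∀ p q : O × O,
      ⟪r • p.1 + mul p.2 x, r • q.1 + mul q.2 x⟫_ℝ
        + ⟪mul p.1 (conj x) - r • p.2, mul q.1 (conj x) - r • q.2⟫_ℝ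
      = ⟪p.1, q.1⟫_ℝ + ⟪p.2, q.2⟫_ℝ := by
    intro r x hr p q
    simp only [inner_add_left, inner_add_right, inner_sub_left, inner_sub_right,
      real_inner_smul_left, real_inner_smul_right, p1, nc]
    rw [adj p.1 x q.2, adj' q.1 x p.2]
    linear_combination (⟪p.1, q.1⟫_ℝ + ⟪p.2, q.2⟫_ℝ) * hr
  have gen : ∀ (r : ℝ) (x : O), r ^ 2 + ‖x‖ ^ 2 = 1 → ∃ g ∈ Spin9,
      ∀ y : O × O, g y = (r • y.1 + mul y.2 x, mul y.1 (conj x) - r • y.2) := by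
    intro r x hr
    let f : (O × O) →ₗ[ℝ] (O × O) :=
      { toFun := fun y => (r • y.1 + mul y.2 x, mul y.1 (conj x) - r • y.2)
        map_add' := by
          intro a b
          ext <;> simp <;> abel
        map_smul' := by
          intro c a
          ext
          · simp [smul_comm c r]
          · simp [smul_comm c r, smul_sub] }
    have hinj : Function.Injective f := by
      rw [← LinearMap.ker_eq_bot, LinearMap.ker_eq_bot']
      intro m hm
      have h := iso r x hr m m
      have h1 : r • m.1 + mul m.2 x = 0 := congrArg Prod.fst hm
      have h2 : mul m.1 (conj x) - r • m.2 = 0 := congrArg Prod.snd hm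
      rw [h1, h2, inner_zero_left, real_inner_self_eq_norm_sq,
        real_inner_self_eq_norm_sq] at h
      have h3 : ‖m.1‖ = 0 := by nlinarith [sq_nonneg ‖m.1‖, sq_nonneg ‖m.2‖]
      have h4 : ‖m.2‖ = 0 := by nlinarith [sq_nonneg ‖m.1‖, sq_nonneg ‖m.2‖]
      exact Prod.ext (norm_eq_zero.1 h3) (norm_eq_zero.1 h4)
    refine ⟨LinearEquiv.ofInjectiveEndo f hinj, ?_, fun y => rfl⟩
    rw [hSpin9]
    exact Subgroup.subset_closure ⟨r, x, hr, fun y => rfl⟩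
  have surj : ∀ a b : O, a ≠ 0 → ∃ x, mul a (conj x) = b := by
    intro a b ha
    have hi : Function.Injective (mul a) := by
      rw [← LinearMap.ker_eq_bot, LinearMap.ker_eq_bot']
      intro m hm
      have h := norm_mul a m
      rw [hm, norm_zero] at h
      rcases mul_eq_zero.1 h.symm with h | h
      · exact absurd (norm_eq_zero.1 h) ha
      · exact norm_eq_zero.1 h
    obtain ⟨z, hz⟩ := LinearMap.injective_iff_surjective.1 hi b
    exact ⟨conj z, by rw [cc, hz]⟩
  have isoS : ∀ g ∈ Spin9, ∀ p q : O × O,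
      ⟪(g p).1, (g q).1⟫_ℝ + ⟪(g p).2, (g q).2⟫_ℝ = ⟪p.1, q.1⟫_ℝ + ⟪p.2, q.2⟫_ℝ := by
    intro g hg
    rw [hSpin9] at hg
    induction hg using Subgroup.closure_induction with
    | mem g hg =>
      obtain ⟨r, x, hr, h⟩ := hg
      intro p q
      rw [h p, h q]
      exact iso r x hr p q
    | one => intro p q; rfl
    | mul a b _ _ ha hb =>
      intro p q
      exact (ha (b p) (b q)).trans (hb p q)
    | inv a _ ha =>
      intro p q
      have h := ha (a⁻¹ p) (a⁻¹ q)
      have hc : ∀ z, a (a⁻¹ z) = z := fun z => a.apply_symm_apply z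
      rw [hc, hc] at h
      exact h.symm
  refine ⟨isoS, ?_⟩
  -- a vector on the first axis goes to `(e, 0)`
  have step2 : ∀ c : O, ‖c‖ = 1 → ∃ g ∈ Spin9, g (c, 0) = (e, 0) := by
    intro c hc
    obtain ⟨x, hx⟩ := surj c e (by rintro rfl; simp at hc)
    have hxn : ‖x‖ ^ 2 = 1 := by
      have h := norm_mul c (conj x)
      rw [hx, he, hc, one_mul] at h
      rw [← nc, ← h]; norm_num
    obtain ⟨g, hg, h⟩ := gen 0 x (by rw [hxn]; norm_num)
    obtain ⟨k, hk, h'⟩ := gen 0 e (by rw [he]; norm_num)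
    refine ⟨k * g, mul_mem hk hg, ?_⟩
    rw [LinearEquiv.mul_apply, h, h']
    simp [hx, unit_left]
  have step1 : ∀ p : O × O, ‖p.1‖ ^ 2 + ‖p.2‖ ^ 2 = 1 → ∃ g ∈ Spin9, (g p).2 = 0 := by
    rintro ⟨a, b⟩ hp
    by_cases ha : a = 0
    · subst ha
      obtain ⟨g, hg, h⟩ := gen 0 e (by rw [he]; norm_num)
      exact ⟨g, hg, by rw [h]; simp⟩
    · obtain ⟨x, hx⟩ := surj a (‖a‖ • b) ha
      have hna : ‖a‖ ≠ 0 := norm_ne_zero_iff.2 ha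
      have hxn : ‖conj x‖ = ‖b‖ := by
        have h := norm_mul a (conj x)
        rw [hx, norm_smul, norm_norm] at h
        exact (mul_left_cancel₀ hna h).symm
      obtain ⟨g, hg, h⟩ := gen ‖a‖ x (by rw [← nc x, hxn]; exact hp)
      exact ⟨g, hg, by rw [h]; simp [hx]⟩
  have base : ∀ p : O × O, ‖p.1‖ ^ 2 + ‖p.2‖ ^ 2 = 1 → ∃ g ∈ Spin9, g p = (e, 0) := by
    intro p hp
    obtain ⟨g, hg, h⟩ := step1 p hp
    have hi := isoS g hg p p
    simp only [real_inner_self_eq_norm_sq] at hi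
    rw [hp, h, norm_zero] at hi
    have hn : ‖(g p).1‖ = 1 := by nlinarith [norm_nonneg (g p).1]
    obtain ⟨k, hk, h'⟩ := step2 _ hn
    refine ⟨k * g, mul_mem hk hg, ?_⟩
    rw [LinearEquiv.mul_apply, ← h', ← h]
  intro p q hp hq
  obtain ⟨g, hg, h⟩ := base p hp
  obtain ⟨k, hk, h'⟩ := base q hq
  refine ⟨k⁻¹ * g, mul_mem (inv_mem hk) hg, ?_⟩
  rw [LinearEquiv.mul_apply, h, ← h']
  exact k.symm_apply_apply q
end

section
/- Spin(7) acts transitively on the unit sphere of 𝕆: for all x, y ∈ 𝕆 with ‖x‖ = ‖y‖ = 1 there exists g ∈ Spin(7) with g(x) = y. Moreover, every x ∈ 𝕆 with ‖x‖ = 1 can be written as x = u·v with u, v ∈ Im 𝕆 and ‖u‖ = ‖v‖ = 1; explicitly, if u ∈ Im 𝕆 satisfies ‖u‖ = 1 and ⟨u, Im x⟩ = 0, then v := −Re(x)·u − u·(Im x) lies in Im 𝕆, satisfies ‖v‖ = 1, and u·v = x. -/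
open scoped InnerProductSpace

/-- `Spin(7)` (the subgroup of linear automorphisms of `𝕆` generated by the
left multiplications `L_u` with `u ∈ Im 𝕆`, `‖u‖ = 1`) acts transitively on the unit sphere of
`𝕆`; moreover every unit octonion `x` factors as `x = u·v` with `u, v` imaginary units, and
explicitly `v = -Re(x)·u - u·(Im x)` works whenever `u` is an imaginary unit orthogonal to
`Im x`. -/
theorem spin7_transitive_and_factorization
    {O : Type*} [NormedAddCommGroup O] [InnerProductSpace ℝ O]
    (hdim : Module.finrank ℝ O = 8)
    (mul : O →ₗ[ℝ] O →ₗ[ℝ] O) (e : O) (he : ‖e‖ = 1)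
    (unit_left : ∀ x : O, mul e x = x) (unit_right : ∀ x : O, mul x e = x)
    (norm_mul : ∀ x y : O, ‖mul x y‖ = ‖x‖ * ‖y‖)
    (Spin7 : Subgroup (O ≃ₗ[ℝ] O))
    (hSpin7 : Spin7 = Subgroup.closure
      {g : O ≃ₗ[ℝ] O | ∃ u : O, ⟪u, e⟫_ℝ = 0 ∧ ‖u‖ = 1 ∧ ∀ x : O, g x = mul u x}) :
    (∀ x y : O, ‖x‖ = 1 → ‖y‖ = 1 → ∃ g ∈ Spin7, g x = y) ∧
    (∀ x u : O, ‖x‖ = 1 → ⟪u, e⟫_ℝ = 0 → ‖u‖ = 1 → ⟪u, x - ⟪x, e⟫_ℝ • e⟫_ℝ = 0 →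
      ⟪-(⟪x, e⟫_ℝ • u) - mul u (x - ⟪x, e⟫_ℝ • e), e⟫_ℝ = 0 ∧
      ‖-(⟪x, e⟫_ℝ • u) - mul u (x - ⟪x, e⟫_ℝ • e)‖ = 1 ∧
      mul u (-(⟪x, e⟫_ℝ • u) - mul u (x - ⟪x, e⟫_ℝ • e)) = x) ∧
    (∀ x : O, ‖x‖ = 1 → ∃ u v : O, ⟪u, e⟫_ℝ = 0 ∧ ⟪v, e⟫_ℝ = 0 ∧
      ‖u‖ = 1 ∧ ‖v‖ = 1 ∧ mul u v = x) := by
  have hL : ∀ u x y : O, ⟪mul u x, mul u y⟫_ℝ = ‖u‖ ^ 2 * ⟪x, y⟫_ℝ := by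
    intro u x y
    have h1 := norm_add_sq_real (mul u x) (mul u y)
    have h2 := norm_add_sq_real x y
    rw [← map_add, norm_mul, norm_mul, norm_mul] at h1
    linear_combination (-1 / 2) * h1 + (1 / 2) * ‖u‖ ^ 2 * h2
  -- left multiplication by an imaginary element is skew
  have hskew : ∀ u x y : O, ⟪u, e⟫_ℝ = 0 → ⟪mul u x, y⟫_ℝ = -⟪x, mul u y⟫_ℝ := by
    intro u x y hu
    have h1 := hL (u + e) x y
    have h2 := norm_add_sq_real u e
    have h3 := hL u x y
    simp only [map_add, LinearMap.add_apply, unit_left, inner_add_left, inner_add_right] at h1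
    rw [hu, he] at h2
    linear_combination h1 - h3 + ⟪x, y⟫_ℝ * h2
  have hsq : ∀ u x : O, ⟪u, e⟫_ℝ = 0 → ‖u‖ = 1 → mul u (mul u x) = -x := by
    intro u x hu hu1
    apply ext_inner_right ℝ
    intro y
    rw [hskew u _ _ hu, hL, hu1, inner_neg_left]
    ring
  have hB : ∀ x u : O, ‖x‖ = 1 → ⟪u, e⟫_ℝ = 0 → ‖u‖ = 1 → ⟪u, x - ⟪x, e⟫_ℝ • e⟫_ℝ = 0 →
      ⟪-(⟪x, e⟫_ℝ • u) - mul u (x - ⟪x, e⟫_ℝ • e), e⟫_ℝ = 0 ∧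
      ‖-(⟪x, e⟫_ℝ • u) - mul u (x - ⟪x, e⟫_ℝ • e)‖ = 1 ∧
      mul u (-(⟪x, e⟫_ℝ • u) - mul u (x - ⟪x, e⟫_ℝ • e)) = x := by
    intro x u hx hu hu1 hux
    have huu : mul u u = -e := by
      have := hsq u e hu hu1
      rwa [unit_right] at this
    have h3 : mul u (-(⟪x, e⟫_ℝ • u) - mul u (x - ⟪x, e⟫_ℝ • e)) = x := by
      rw [map_sub, map_neg, map_smul, huu, hsq u _ hu hu1]
      module
    refine ⟨?_, ?_, h3⟩
    · rw [inner_sub_left, inner_neg_left, real_inner_smul_left, hu, hskew u _ _ hu, unit_right,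
        real_inner_comm u, hux]
      ring
    · have h4 := norm_mul u (-(⟪x, e⟫_ℝ • u) - mul u (x - ⟪x, e⟫_ℝ • e))
      rw [h3, hx, hu1, one_mul] at h4
      exact h4.symm
  have hC : ∀ x : O, ‖x‖ = 1 → ∃ u v : O, ⟪u, e⟫_ℝ = 0 ∧ ⟪v, e⟫_ℝ = 0 ∧
      ‖u‖ = 1 ∧ ‖v‖ = 1 ∧ mul u v = x := by
    intro x hx
    classical
    have : FiniteDimensional ℝ O := Module.finite_of_finrank_pos (by omega)
    have hne : (Submodule.span ℝ {e, x})ᗮ ≠ ⊥ := by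
      intro h
      rw [Submodule.orthogonal_eq_bot_iff] at h
      have h1 := finrank_span_le_card (R := ℝ) ({e, x} : Set O)
      rw [h, finrank_top, hdim] at h1
      have h2 : ({e, x} : Set O).toFinset.card ≤ 2 := by
        rw [Set.toFinset_card, ← Nat.card_eq_fintype_card, Nat.card_coe_set_eq]
        exact (Set.ncard_insert_le e {x}).trans (by rw [Set.ncard_singleton])
      omega
    obtain ⟨w, hw, hw0⟩ := Submodule.exists_mem_ne_zero_of_ne_bot hne
    rw [Submodule.mem_orthogonal'] at hw
    have hwe := hw e (Submodule.subset_span (by simp))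
    have hwx := hw x (Submodule.subset_span (by simp))
    have hue : ⟪‖w‖⁻¹ • w, e⟫_ℝ = 0 := by rw [real_inner_smul_left, hwe, mul_zero]
    have hux : ⟪‖w‖⁻¹ • w, x⟫_ℝ = 0 := by rw [real_inner_smul_left, hwx, mul_zero]
    have hu1 : ‖‖w‖⁻¹ • w‖ = 1 := by
      rw [norm_smul, norm_inv, norm_norm, inv_mul_cancel₀ (norm_ne_zero_iff.mpr hw0)]
    obtain ⟨a, b, c⟩ := hB x _ hx hue hu1 (by
      rw [inner_sub_right, hux, real_inner_smul_right, hue]; ring)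
    exact ⟨_, _, hue, a, hu1, b, c⟩
  refine ⟨?_, hB, hC⟩
  have hgen : ∀ u : O, ⟪u, e⟫_ℝ = 0 → ‖u‖ = 1 → ∃ g ∈ Spin7, ∀ x, g x = mul u x := by
    intro u hu hu1
    refine ⟨LinearEquiv.ofLinearMap (mul u) (-(mul u)) ?_ ?_, ?_, fun x => rfl⟩
    · ext x
      simp [hsq u x hu hu1]
    · ext x
      simp [hsq u x hu hu1]
    · rw [hSpin7]
      exact Subgroup.subset_closure ⟨u, hu, hu1, fun x => rfl⟩
  have hone : ∀ x : O, ‖x‖ = 1 → ∃ g ∈ Spin7, g e = x := by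
    intro x hx
    obtain ⟨u, v, hu, hv, hu1, hv1, huv⟩ := hC x hx
    obtain ⟨g, hg, hgu⟩ := hgen u hu hu1
    obtain ⟨k, hk, hkv⟩ := hgen v hv hv1
    refine ⟨g * k, Spin7.mul_mem hg hk, ?_⟩
    rw [LinearEquiv.mul_apply, hkv, hgu, unit_right, huv]
  intro x y hx hy
  obtain ⟨g, hg, hgx⟩ := hone x hx
  obtain ⟨k, hk, hky⟩ := hone y hy
  refine ⟨k * g⁻¹, Spin7.mul_mem hk (Spin7.inv_mem hg), ?_⟩
  have hinv : g⁻¹ x = e := by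
    rw [← hgx, ← LinearEquiv.mul_apply, inv_mul_cancel, LinearEquiv.coe_one, id]
  rw [LinearEquiv.mul_apply, hinv, hky]
end

section
/- For every x ∈ 𝕆 with ‖x‖ = 1, the left multiplication L_x and the right multiplication R_x are linear isometries of 𝕆 with determinant equal to 1 (i.e. L_x, R_x ∈ SO(𝕆)). -/
open scoped InnerProductSpace

theorem det_eq_one_aux
    {O : Type*} [NormedAddCommGroup O] [InnerProductSpace ℝ O]
    (hdim : Module.finrank ℝ O = 8)
    (L : O →ₗ[ℝ] O →ₗ[ℝ] O) (e : O) (he : ‖e‖ = 1)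
    (unit_left : ∀ x : O, L e x = x)
    (hL : ∀ x y : O, ‖x‖ = 1 → ‖L x y‖ = ‖y‖)
    (x : O) (hx : ‖x‖ = 1) : LinearMap.det (L x) = 1 := by
  have : FiniteDimensional ℝ O := FiniteDimensional.of_finrank_pos (by omega)
  have habs : ∀ z : O, ‖z‖ = 1 → |LinearMap.det (L z)| = 1 := by
    intro z hz
    let f : O →ₗᵢ[ℝ] O := ⟨L z, fun y => hL z y hz⟩
    have h := f.normDet_eq_one
    rw [LinearMap.normDet_eq_norm_det] at h
    exact h
  have hcont : Continuous fun z : O => LinearMap.det (L z) := by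
    let b := Module.finBasis ℝ O
    have h : (fun z : O => LinearMap.det (L z)) =
        fun z => (((LinearMap.toMatrix b b).toLinearMap ∘ₗ L) z).det := by
      funext z
      simp [LinearMap.det_toMatrix]
    rw [h]
    exact Continuous.matrix_det (LinearMap.continuous_of_finiteDimensional _)
  have hone : LinearMap.det (L e) = 1 := by
    have : L e = LinearMap.id := LinearMap.ext unit_left
    rw [this, LinearMap.det_id]
  rcases (abs_eq zero_le_one).1 (habs x hx) with h | h
  · exact h
  exfalso
  have hrank : 1 < Module.rank ℝ O := by
    rw [← Module.finrank_eq_rank, hdim]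
    norm_num
  have hpre := isPreconnected_sphere hrank (0 : O) 1
  obtain ⟨z, hz, hz0⟩ := hpre.intermediate_value (a := x) (b := e) (by simpa using hx)
    (by simpa using he) hcont.continuousOn
    (show (0 : ℝ) ∈ Set.Icc _ _ by rw [h, hone]; norm_num)
  have := habs z (by simpa using hz)
  simp only at hz0
  rw [hz0] at this
  norm_num at this

/-- For every unit octonion `x`, the left multiplication `L_x` and the right
multiplication `R_x` are linear isometries of `𝕆` of determinant `1`, i.e. elements of
`SO(𝕆)`. -/
theorem mul_left_right_mem_SO
    {O : Type*} [NormedAddCommGroup O] [InnerProductSpace ℝ O]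
    (hdim : Module.finrank ℝ O = 8)
    (mul : O →ₗ[ℝ] O →ₗ[ℝ] O) (e : O) (he : ‖e‖ = 1)
    (unit_left : ∀ x : O, mul e x = x) (unit_right : ∀ x : O, mul x e = x)
    (norm_mul : ∀ x y : O, ‖mul x y‖ = ‖x‖ * ‖y‖)
    (x : O) (hx : ‖x‖ = 1) :
    (∀ y : O, ‖mul x y‖ = ‖y‖) ∧ (∀ y : O, ‖mul y x‖ = ‖y‖) ∧
    LinearMap.det (mul x) = 1 ∧ LinearMap.det (mul.flip x) = 1 := by
  have h1 : ∀ x y : O, ‖x‖ = 1 → ‖mul x y‖ = ‖y‖ := fun x y h => by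
    rw [norm_mul, h, one_mul]
  have h2 : ∀ x y : O, ‖x‖ = 1 → ‖mul y x‖ = ‖y‖ := fun x y h => by
    rw [norm_mul, h, mul_one]
  exact ⟨fun y => h1 x y hx, fun y => h2 x y hx,
    det_eq_one_aux hdim mul e he unit_left h1 x hx,
    det_eq_one_aux hdim mul.flip e he unit_right h2 x hx⟩
end

section
/- For every g ∈ Spin(7) and all x, y ∈ 𝕆 one has g(x·y) = χ_g(x)·g(y), where χ_g(x) := ⟨x,1⟩·1 + g((x − ⟨x,1⟩·1)·g⁻¹(1)). Moreover, every g ∈ Spin(7) is a linear isometry of 𝕆, χ_g maps Im 𝕆 isometrically onto Im 𝕆, and χ_{g∘h} = χ_g ∘ χ_h for all g, h ∈ Spin(7). -/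
open scoped InnerProductSpace

/-- For `g ∈ Spin(7)` one has `g(x·y) = χ_g(x)·g(y)` where
`χ_g(x) = ⟨x,1⟩·1 + g((x - ⟨x,1⟩·1)·g⁻¹(1))`; moreover every `g ∈ Spin(7)` is a linear
isometry of `𝕆`, `χ_g` maps `Im 𝕆` isometrically onto `Im 𝕆`, and `χ_{g∘h} = χ_g ∘ χ_h`. -/
theorem spin7_vector_representation
    {O : Type*} [NormedAddCommGroup O] [InnerProductSpace ℝ O]
    (hdim : Module.finrank ℝ O = 8)
    (mul : O →ₗ[ℝ] O →ₗ[ℝ] O) (e : O) (he : ‖e‖ = 1)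
    (unit_left : ∀ x : O, mul e x = x) (unit_right : ∀ x : O, mul x e = x)
    (norm_mul : ∀ x y : O, ‖mul x y‖ = ‖x‖ * ‖y‖)
    (Spin7 : Subgroup (O ≃ₗ[ℝ] O))
    (hSpin7 : Spin7 = Subgroup.closure
      {g : O ≃ₗ[ℝ] O | ∃ u : O, ⟪u, e⟫_ℝ = 0 ∧ ‖u‖ = 1 ∧ ∀ x : O, g x = mul u x})
    (chi : (O ≃ₗ[ℝ] O) → O → O)
    (hchi : ∀ (g : O ≃ₗ[ℝ] O) (x : O),
      chi g x = ⟪x, e⟫_ℝ • e + g (mul (x - ⟪x, e⟫_ℝ • e) (g.symm e))) :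
    (∀ g ∈ Spin7, ∀ x y : O, g (mul x y) = mul (chi g x) (g y)) ∧
    (∀ g ∈ Spin7, ∀ p q : O, ⟪g p, g q⟫_ℝ = ⟪p, q⟫_ℝ) ∧
    (∀ g ∈ Spin7, ∀ u : O, ⟪u, e⟫_ℝ = 0 → ⟪chi g u, e⟫_ℝ = 0) ∧
    (∀ g ∈ Spin7, ∀ u u' : O, ⟪u, e⟫_ℝ = 0 → ⟪u', e⟫_ℝ = 0 →
      ⟪chi g u, chi g u'⟫_ℝ = ⟪u, u'⟫_ℝ) ∧
    (∀ g ∈ Spin7, ∀ v : O, ⟪v, e⟫_ℝ = 0 → ∃ u : O, ⟪u, e⟫_ℝ = 0 ∧ chi g u = v) ∧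
    (∀ g ∈ Spin7, ∀ h ∈ Spin7, ∀ x : O, chi (h.trans g) x = chi g (chi h x)) := by
  -- polarized composition identities
  have inner_sq : ∀ x y z : O, ⟪mul x y, mul x z⟫_ℝ = ‖x‖ ^ 2 * ⟪y, z⟫_ℝ := by
    intro x y z
    have h1 := norm_mul x (y + z)
    have h2 := norm_mul x y
    have h3 := norm_mul x z
    rw [map_add] at h1
    have e1 := norm_add_sq_real (mul x y) (mul x z)
    have e2 := norm_add_sq_real y z
    rw [h1, h2, h3, mul_pow, mul_pow, mul_pow, e2] at e1
    linarith
  have pol : ∀ x w y z : O,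
      ⟪mul x y, mul w z⟫_ℝ + ⟪mul w y, mul x z⟫_ℝ = 2 * ⟪x, w⟫_ℝ * ⟪y, z⟫_ℝ := by
    intro x w y z
    have h1 := inner_sq (x + w) y z
    have h2 := inner_sq x y z
    have h3 := inner_sq w y z
    rw [norm_add_sq_real, map_add, LinearMap.add_apply, LinearMap.add_apply, inner_add_left,
      inner_add_right, inner_add_right] at h1
    linarith
  have adj : ∀ x p z : O, ⟪mul x p, z⟫_ℝ = 2 * ⟪x, e⟫_ℝ * ⟪p, z⟫_ℝ - ⟪p, mul x z⟫_ℝ := by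
    intro x p z
    have h := pol x e p z
    rw [unit_left, unit_left] at h
    linarith
  have hee : ⟪e, e⟫_ℝ = 1 := by rw [real_inner_self_eq_norm_sq, he]; norm_num
  -- the relation between `g` and its vector representation
  let R : (O ≃ₗ[ℝ] O) → (O ≃ₗ[ℝ] O) → Prop := fun g f =>
    f e = e ∧ (∀ p q : O, ⟪g p, g q⟫_ℝ = ⟪p, q⟫_ℝ) ∧ (∀ p q : O, ⟪f p, f q⟫_ℝ = ⟪p, q⟫_ℝ) ∧
      ∀ x y : O, g (mul x y) = mul (f x) (g y)
  have Rmul : ∀ g f g' f', R g f → R g' f' → R (g * g') (f * f') := by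
    rintro g f g' f' ⟨a, b, c, d⟩ ⟨a', b', c', d'⟩
    refine ⟨?_, ?_, ?_, ?_⟩
    · simp [LinearEquiv.mul_apply, a, a']
    · intro p q; simp [LinearEquiv.mul_apply, b, b']
    · intro p q; simp [LinearEquiv.mul_apply, c, c']
    · intro p q; simp [LinearEquiv.mul_apply, d, d']
  have Rinv : ∀ g f, R g f → R g⁻¹ f⁻¹ := by
    rintro g f ⟨a, b, c, d⟩
    have hg : ∀ x, g (g⁻¹ x) = x := fun x => g.apply_symm_apply x
    have hf : ∀ x, f (f⁻¹ x) = x := fun x => f.apply_symm_apply x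
    refine ⟨?_, ?_, ?_, ?_⟩
    · apply f.injective; rw [hf, a]
    · intro p q; rw [← b, hg, hg]
    · intro p q; rw [← c, hf, hf]
    · intro p q; apply g.injective; rw [d, hg, hg, hf]
  have Rgen : ∀ (g : O ≃ₗ[ℝ] O) (u : O), ⟪u, e⟫_ℝ = 0 → ‖u‖ = 1 → (∀ x : O, g x = mul u x) →
      ∃ f, R g f := by
    intro g u hu hn hg
    have huu : ⟪u, u⟫_ℝ = 1 := by rw [real_inner_self_eq_norm_sq, hn]; norm_num
    have heu : ⟪e, u⟫_ℝ = 0 := by rw [real_inner_comm]; exact hu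
    let F : O →ₗ[ℝ] O := IsLinearMap.mk'
      (fun x => (2 * ⟪e, x⟫_ℝ) • e - x + (2 * ⟪u, x⟫_ℝ) • u)
      { map_add := by intro x y; simp only [inner_add_right]; module
        map_smul := by intro c x; simp only [inner_smul_right]; module }
    have hF : ∀ x, F x = (2 * ⟪e, x⟫_ℝ) • e - x + (2 * ⟪u, x⟫_ℝ) • u := fun x => rfl
    have hinv : Function.Involutive F := by
      intro x
      rw [hF (F x), hF x]
      simp only [inner_add_right, inner_sub_right, inner_smul_right, hee, huu, hu, heu]
      module
    have hsq : ∀ y, mul u (mul u y) = -y := by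
      intro y
      apply ext_inner_right ℝ
      intro z
      rw [adj, inner_sq, hu, hn, inner_neg_left]
      ring
    refine ⟨LinearEquiv.ofInvolutive F hinv, ?_, ?_, ?_, ?_⟩
    · change F e = e
      rw [hF, hee, hu]; module
    · intro p q
      rw [hg, hg, inner_sq, hn]; ring
    · intro p q
      change ⟪F p, F q⟫_ℝ = _
      rw [hF, hF]
      simp only [inner_add_right, inner_sub_right, inner_smul_right, inner_add_left,
        inner_sub_left, real_inner_smul_left, hee, huu, hu, heu, real_inner_comm e, 
        real_inner_comm u]
      ring
    · intro x y
      change g (mul x y) = mul (F x) (g y)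
      rw [hg, hg, hF]
      simp only [map_add, map_sub, map_smul, LinearMap.add_apply, LinearMap.sub_apply,
        LinearMap.smul_apply, unit_left, hsq]
      apply ext_inner_right ℝ
      intro z
      simp only [inner_add_left, inner_sub_left, real_inner_smul_left, inner_neg_left]
      have h1 := adj u (mul x y) z
      have h2 := adj x (mul u y) z
      have h3 := pol x u y z
      rw [hu] at h1
      rw [real_inner_comm x e, real_inner_comm x u]
      linarith
  have key : ∀ g ∈ Spin7, ∃ f, R g f := by
    intro g hg
    rw [hSpin7] at hg
    induction hg using Subgroup.closure_induction with
    | mem g h =>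
      obtain ⟨u, h1, h2, h3⟩ := h
      exact Rgen g u h1 h2 h3
    | one => exact ⟨1, rfl, fun _ _ => rfl, fun _ _ => rfl, fun _ _ => rfl⟩
    | mul g g' _ _ h h' =>
      obtain ⟨f, hf⟩ := h
      obtain ⟨f', hf'⟩ := h'
      exact ⟨_, Rmul _ _ _ _ hf hf'⟩
    | inv g _ h =>
      obtain ⟨f, hf⟩ := h
      exact ⟨_, Rinv _ _ hf⟩
  have chi_eq : ∀ g f, R g f → ∀ x, chi g x = f x := by
    rintro g f ⟨a, b, c, d⟩ x
    rw [hchi, d, LinearEquiv.apply_symm_apply, unit_right, map_sub, map_smul, a]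
    abel
  refine ⟨?_, ?_, ?_, ?_, ?_, ?_⟩
  · intro g hg x y
    obtain ⟨f, hf⟩ := key g hg
    rw [chi_eq g f hf]; exact hf.2.2.2 x y
  · intro g hg
    obtain ⟨f, hf⟩ := key g hg
    exact hf.2.1
  · intro g hg u hu
    obtain ⟨f, hf⟩ := key g hg
    rw [chi_eq g f hf]
    have h := hf.2.2.1 u e
    rw [hf.1] at h
    rw [h, hu]
  · intro g hg u u' _ _
    obtain ⟨f, hf⟩ := key g hg
    rw [chi_eq g f hf, chi_eq g f hf]
    exact hf.2.2.1 u u'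
  · intro g hg v hv
    obtain ⟨f, hf⟩ := key g hg
    refine ⟨f.symm v, ?_, ?_⟩
    · have h := hf.2.2.1 (f.symm v) e
      rw [hf.1, LinearEquiv.apply_symm_apply] at h
      rw [← h, hv]
    · rw [chi_eq g f hf, LinearEquiv.apply_symm_apply]
  · intro g hg h hh x
    obtain ⟨f, hf⟩ := key g hg
    obtain ⟨f', hf'⟩ := key h hh
    rw [chi_eq g f hf, chi_eq h f' hf']
    exact chi_eq (g * h) (f * f') (Rmul _ _ _ _ hf hf') x
end

section
/- Every A ∈ 𝔰𝔭𝔦𝔫(9) satisfies the following relations: (1) A is skew-adjoint, i.e. ⟨A p, q⟩ = −⟨p, A q⟩ for all p, q ∈ 𝕆 ⊕ 𝕆; (2) A₁₀(y) = y·(A₁₀(1)) for all y ∈ 𝕆; (3) A₀₀(y) − y·(A₀₀(1)) = A₁₁(y) − y·(A₁₁(1)) for all y ∈ 𝕆; (4) Σ_{c=0}^{7} ⟨x·e_c, A₁₁(e_c)⟩ = 4·⟨x, A₀₀(1)⟩ for all x ∈ 𝕆. -/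
open scoped InnerProductSpace

/-- Every element `A` of the Lie algebra `𝔰𝔭𝔦𝔫(9)` (the span of the
compositions `ℐ_i ∘ ℐ_j`, `i < j`, of the operators `ℐ_i(y₀,y₁) = (y₁·e_i, y₀·ē_i)` and
`ℐ₈(y₀,y₁) = (y₀, -y₁)` on `𝕆 ⊕ 𝕆`) is skew-adjoint and its blocks satisfy the relations
`A₁₀(y) = y·A₁₀(1)`, `A₀₀(y) − y·A₀₀(1) = A₁₁(y) − y·A₁₁(1)` and
`Σ_c ⟨x e_c, A₁₁ e_c⟩ = 4⟨x, A₀₀(1)⟩`. -/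
theorem spin9_lie_algebra_relations
    {O : Type*} [NormedAddCommGroup O] [InnerProductSpace ℝ O]
    (hdim : Module.finrank ℝ O = 8)
    (mul : O →ₗ[ℝ] O →ₗ[ℝ] O) (e : O) (he : ‖e‖ = 1)
    (unit_left : ∀ x : O, mul e x = x) (unit_right : ∀ x : O, mul x e = x)
    (norm_mul : ∀ x y : O, ‖mul x y‖ = ‖x‖ * ‖y‖)
    (conj : O → O) (hconj : ∀ x : O, conj x = (2 * ⟪x, e⟫_ℝ) • e - x)
    (b : OrthonormalBasis (Fin 8) ℝ O) (hb : b 0 = e)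
    (J : Fin 9 → ((O × O) →ₗ[ℝ] (O × O)))
    (hJ : ∀ (i : Fin 8) (y : O × O),
      J i.castSucc y = (mul y.2 (b i), mul y.1 (conj (b i))))
    (hJ8 : ∀ y : O × O, J 8 y = (y.1, -y.2))
    (spin9 : Submodule ℝ ((O × O) →ₗ[ℝ] (O × O)))
    (hspin9 : spin9 = Submodule.span ℝ
      {A : (O × O) →ₗ[ℝ] (O × O) | ∃ i j : Fin 9, i < j ∧ A = (J i).comp (J j)}) :
    ∀ A ∈ spin9,
      (∀ p q : O × O,
        ⟪(A p).1, q.1⟫_ℝ + ⟪(A p).2, q.2⟫_ℝ = -(⟪p.1, (A q).1⟫_ℝ + ⟪p.2, (A q).2⟫_ℝ)) ∧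
      (∀ y : O, (A (y, (0 : O))).2 = mul y ((A (e, (0 : O))).2)) ∧
      (∀ y : O, (A (y, (0 : O))).1 - mul y ((A (e, (0 : O))).1)
        = (A ((0 : O), y)).2 - mul y ((A ((0 : O), e)).2)) ∧
      (∀ x : O, ∑ c : Fin 8, ⟪mul x (b c), (A ((0 : O), b c)).2⟫_ℝ
        = 4 * ⟪x, (A (e, (0 : O))).1⟫_ℝ) := by
  classical
  have h1 : ∀ a b d : O, ⟪mul a b, mul a d⟫_ℝ = ⟪a, a⟫_ℝ * ⟪b, d⟫_ℝ := by
    intro a b d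
    have k1 := norm_mul a (b + d)
    have k2 := norm_mul a b
    have k3 := norm_mul a d
    have n1 := congrArg (fun t : ℝ => t ^ 2) k1
    have n2 := congrArg (fun t : ℝ => t ^ 2) k2
    have n3 := congrArg (fun t : ℝ => t ^ 2) k3
    simp only [mul_pow, ← real_inner_self_eq_norm_sq, map_add, inner_add_left,
      inner_add_right] at n1 n2 n3
    have c1 := real_inner_comm (mul a b) (mul a d)
    have c2 := real_inner_comm b d
    rw [c1, c2] at n1
    linarith
  have pol : ∀ a b c d : O, ⟪mul a b, mul c d⟫_ℝ + ⟪mul a d, mul c b⟫_ℝ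
      = 2 * ⟪a, c⟫_ℝ * ⟪b, d⟫_ℝ := by
    intro a b c d
    have k := h1 (a + c) b d
    have k1 := h1 a b d
    have k2 := h1 c b d
    simp only [map_add, LinearMap.add_apply, inner_add_left, inner_add_right] at k
    have c1 := real_inner_comm (mul a d) (mul c b)
    have c2 := real_inner_comm a c
    rw [c2] at k
    linarith
  have hee : ⟪e, e⟫_ℝ = 1 := by rw [real_inner_self_eq_norm_sq, he]; norm_num
  have conjconj : ∀ x, conj (conj x) = x := by
    intro x
    simp only [hconj, inner_sub_left, real_inner_smul_left, hee]
    module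
  have conjadj : ∀ x y, ⟪conj x, y⟫_ℝ = ⟪x, conj y⟫_ℝ := by
    intro x y
    simp only [hconj, inner_sub_left, inner_sub_right, real_inner_smul_left,
      real_inner_smul_right]
    rw [real_inner_comm y e]
    ring
  have conjinner : ∀ x y, ⟪conj x, conj y⟫_ℝ = ⟪x, y⟫_ℝ := by
    intro x y
    rw [conjadj, conjconj]
  have adjR : ∀ a u w, ⟪mul a u, w⟫_ℝ = ⟪a, mul w (conj u)⟫_ℝ := by
    intro a u w
    have k := pol a u w e
    simp only [unit_right] at k
    simp only [hconj, map_sub, map_smul, unit_right, inner_sub_right, real_inner_smul_right]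
    linarith
  have adjL : ∀ u a w, ⟪mul u a, w⟫_ℝ = ⟪a, mul (conj u) w⟫_ℝ := by
    intro u a w
    have k := pol u a e w
    simp only [unit_left] at k
    simp only [hconj, map_sub, map_smul, unit_left, inner_sub_right, real_inner_smul_right,
      LinearMap.sub_apply, LinearMap.smul_apply]
    have c1 := real_inner_comm (mul u w) a
    linarith
  have cliff : ∀ z u v, mul (mul z (conj u)) v + mul (mul z (conj v)) u
      = (2 * ⟪u, v⟫_ℝ) • z := by
    intro z u v
    refine ext_inner_right ℝ fun w => ?_
    rw [inner_add_left, adjR _ v w, adjR _ u w, pol, conjinner, real_inner_smul_left]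
    ring
  have conjmul : ∀ x y, conj (mul x y) = mul (conj y) (conj x) := by
    intro x y
    refine ext_inner_right ℝ fun w => ?_
    rw [conjadj, adjL x y, ← adjR y w (conj x), adjL (conj y) (conj x), conjconj,
      real_inner_comm]
  have tri : ∀ f v : O, mul (mul f v) f
      = (2 * ⟪conj v, f⟫_ℝ) • f - ⟪f, f⟫_ℝ • conj v := by
    intro f v
    have k := hconj (conj (mul f v))
    rw [conjconj] at k
    have k2 := cliff (conj v) f f
    have k3 : mul (mul (conj v) (conj f)) f = ⟪f, f⟫_ℝ • conj v := by
      have : (2 : ℝ) • mul (mul (conj v) (conj f)) f = (2 : ℝ) • (⟪f, f⟫_ℝ • conj v) := by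
        rw [two_smul, k2, smul_smul]
      exact smul_right_injective O (two_ne_zero : (2 : ℝ) ≠ 0) this
    rw [k, conjmul]
    simp only [map_sub, map_smul, LinearMap.sub_apply, LinearMap.smul_apply, unit_left, k3]
    rw [adjR, unit_left, conjconj]
  have trace : ∀ x u v : O, ⟪u, v⟫_ℝ = 0 →
      ∑ c : Fin 8, ⟪mul x (b c), mul (mul (b c) v) (conj u)⟫_ℝ
        = 4 * ⟪x, mul (conj v) u⟫_ℝ := by
    intro x u v huv
    have term : ∀ c : Fin 8, ⟪mul x (b c), mul (mul (b c) v) (conj u)⟫_ℝ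
        = 2 * (⟪mul x (conj v), b c⟫_ℝ * ⟪b c, conj u⟫_ℝ)
          - 2 * (⟪mul x (conj u), b c⟫_ℝ * ⟪b c, conj v⟫_ℝ)
          + ⟪mul x (conj u), conj v⟫_ℝ := by
      intro c
      have k := pol x (b c) (mul (b c) v) (conj u)
      have k1 : ⟪b c, b c⟫_ℝ = 1 := by
        rw [real_inner_self_eq_norm_sq, b.norm_eq_one]; norm_num
      rw [tri, k1, inner_sub_right, real_inner_smul_right, real_inner_smul_right] at k
      have k2 : ⟪x, mul (b c) v⟫_ℝ = ⟪mul x (conj v), b c⟫_ℝ := by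
        rw [adjR, conjconj]
      rw [k2] at k
      have k3 := real_inner_comm (conj v) (b c)
      rw [← k3] at k
      linarith
    simp only [term, Finset.sum_add_distrib, Finset.sum_sub_distrib, ← Finset.mul_sum,
      b.sum_inner_mul_inner]
    simp only [adjR, conjconj, Finset.sum_const, Finset.card_univ, Fintype.card_fin]
    have k := cliff e u v
    simp only [unit_left, huv, mul_zero, zero_smul] at k
    rw [eq_neg_of_add_eq_zero_left k, inner_neg_right]
    simp only [nsmul_eq_mul]
    push_cast
    ring
  intro A hA
  rw [hspin9] at hA
  induction hA using Submodule.span_induction with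
  | zero => simp
  | add A B _ _ hA hB =>
    obtain ⟨a1, a2, a3, a4⟩ := hA
    obtain ⟨b1, b2, b3, b4⟩ := hB
    refine ⟨fun p q => ?_, fun y => ?_, fun y => ?_, fun x => ?_⟩
    · have := a1 p q
      have := b1 p q
      simp only [LinearMap.add_apply, Prod.fst_add, Prod.snd_add, inner_add_left,
        inner_add_right]
      linarith
    · simp only [LinearMap.add_apply, Prod.snd_add, map_add]
      rw [a2, b2]
    · simp only [LinearMap.add_apply, Prod.snd_add, Prod.fst_add, map_add]
      rw [add_sub_add_comm, a3, b3, add_sub_add_comm]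
    · simp only [LinearMap.add_apply, Prod.snd_add, Prod.fst_add, inner_add_right,
        Finset.sum_add_distrib]
      rw [a4, b4]
      ring
  | smul r A _ hA =>
    obtain ⟨a1, a2, a3, a4⟩ := hA
    refine ⟨fun p q => ?_, fun y => ?_, fun y => ?_, fun x => ?_⟩
    · have := a1 p q
      simp only [LinearMap.smul_apply, Prod.smul_fst, Prod.smul_snd, real_inner_smul_left,
        real_inner_smul_right]
      linear_combination r * this
    · simp only [LinearMap.smul_apply, Prod.smul_snd, map_smul]
      rw [a2]
    · simp only [LinearMap.smul_apply, Prod.smul_snd, Prod.smul_fst, map_smul]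
      rw [← smul_sub, a3, smul_sub]
    · simp only [LinearMap.smul_apply, Prod.smul_snd, Prod.smul_fst, real_inner_smul_right,
        ← Finset.mul_sum]
      rw [a4]
      ring
  | mem A hA =>
    obtain ⟨i, j, hij, rfl⟩ := hA
    obtain ⟨i, rfl⟩ : ∃ i' : Fin 8, i = i'.castSucc :=
      ⟨i.castPred (ne_of_lt (lt_of_lt_of_le hij (Fin.le_last j))), by simp⟩
    rcases Fin.eq_castSucc_or_eq_last j with ⟨j, rfl⟩ | rfl
    · have huv : ⟪b i, b j⟫_ℝ = 0 :=
        b.orthonormal.2 (fun h => by simp [h] at hij)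
      simp only [LinearMap.comp_apply, hJ]
      generalize b i = u at *
      generalize b j = v at *
      refine ⟨fun p q => ?_, fun y => ?_, fun y => ?_, fun x => ?_⟩
      · have k1 := cliff q.1 u v
        have k2 := cliff q.2 (conj u) (conj v)
        rw [conjinner] at k2
        simp only [huv, mul_zero, zero_smul, conjconj] at k1 k2
        have e1 : ⟪mul (mul p.1 (conj v)) u, q.1⟫_ℝ = -⟪p.1, mul (mul q.1 (conj v)) u⟫_ℝ := by
          rw [adjR, adjR, conjconj, eq_neg_of_add_eq_zero_left k1, inner_neg_right]
        have e2 : ⟪mul (mul p.2 v) (conj u), q.2⟫_ℝ = -⟪p.2, mul (mul q.2 v) (conj u)⟫_ℝ := by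
          rw [adjR, adjR, conjconj, eq_neg_of_add_eq_zero_left k2, inner_neg_right]
        rw [e1, e2]
        ring
      · simp
      · simp only [hconj, map_sub, map_smul, unit_left, unit_right, LinearMap.sub_apply,
          LinearMap.smul_apply]
        module
      · simp only [unit_left]
        exact trace x u v huv
    · have h8 : ∀ y, J (Fin.last 8) y = (y.1, -y.2) := hJ8
      simp only [LinearMap.comp_apply, hJ, h8]
      refine ⟨fun p q => ?_, fun y => ?_, fun y => ?_, fun x => ?_⟩
      · simp only [map_neg, LinearMap.neg_apply, inner_neg_left, inner_neg_right]
        rw [adjR, adjR, conjconj]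
        ring
      · simp only [unit_left]
      · simp
      · simp
end

section
/- Let A ∈ End(𝕆 ⊕ 𝕆). Then A ∈ 𝔰𝔭𝔦𝔫(9) if and only if the following four conditions hold: (1) A is skew-adjoint, i.e. ⟨A p, q⟩ = −⟨p, A q⟩ for all p, q ∈ 𝕆 ⊕ 𝕆; (2) A₁₀(y) = y·(A₁₀(1)) for all y ∈ 𝕆; (3) A₀₀(y) − y·(A₀₀(1)) = A₁₁(y) − y·(A₁₁(1)) for all y ∈ 𝕆; (4) Σ_{c=0}^{7} ⟨x·e_c, A₁₁(e_c)⟩ = 4·⟨x, A₀₀(1)⟩ for all x ∈ 𝕆. -/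
open scoped InnerProductSpace

/-- Unital composition algebra data. -/
structure CompAlg {O : Type*} [NormedAddCommGroup O] [InnerProductSpace ℝ O]
    (mul : O →ₗ[ℝ] O →ₗ[ℝ] O) (e : O) : Prop where
  ne : ‖e‖ = 1
  ul : ∀ x : O, mul e x = x
  ur : ∀ x : O, mul x e = x
  nm : ∀ x y : O, ‖mul x y‖ = ‖x‖ * ‖y‖

namespace CompAlg

variable {O : Type*} [NormedAddCommGroup O] [InnerProductSpace ℝ O]

/-- Conjugation as a linear map. -/
noncomputable def cj (e : O) : O →ₗ[ℝ] O :=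
  (2 : ℝ) • (LinearMap.toSpanSingleton ℝ O e).comp (innerₗ O e) - LinearMap.id

theorem cj_apply (e x : O) : cj e x = (2 * ⟪x, e⟫_ℝ) • e - x := by
  simp [cj, real_inner_comm, mul_smul]

variable {mul : O →ₗ[ℝ] O →ₗ[ℝ] O} {e : O}

theorem flip (h : CompAlg mul e) : CompAlg mul.flip e where
  ne := h.ne
  ul := fun x => by simp [h.ur]
  ur := fun x => by simp [h.ul]
  nm := fun x y => by simp [h.nm, mul_comm]

theorem ee (h : CompAlg mul e) : ⟪e, e⟫_ℝ = 1 := by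
  rw [real_inner_self_eq_norm_sq, h.ne]; norm_num

theorem inner_left (h : CompAlg mul e) (x u v : O) :
    ⟪mul x u, mul x v⟫_ℝ = ⟪x, x⟫_ℝ * ⟪u, v⟫_ℝ := by
  have h1 := norm_add_sq_real (mul x u) (mul x v)
  have h2 := norm_add_sq_real u v
  rw [← map_add, h.nm, h.nm, h.nm] at h1
  rw [real_inner_self_eq_norm_sq]
  linear_combination (-1 / 2) * h1 + (‖x‖ ^ 2 / 2) * h2

theorem exch (h : CompAlg mul e) (x y u v : O) :
    ⟪mul x u, mul y v⟫_ℝ + ⟪mul x v, mul y u⟫_ℝ = 2 * ⟪x, y⟫_ℝ * ⟪u, v⟫_ℝ := by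
  have h1 := h.inner_left (x + y) u v
  have h2 := h.inner_left x u v
  have h3 := h.inner_left y u v
  simp only [map_add, LinearMap.add_apply, inner_add_left, inner_add_right] at h1
  rw [real_inner_comm (mul y u) (mul x v)]
  rw [real_inner_comm x y] at h1
  linarith [real_inner_comm x y]

theorem adj_r (h : CompAlg mul e) (x u y : O) :
    ⟪mul x u, y⟫_ℝ = ⟪x, mul y (cj e u)⟫_ℝ := by
  have := h.exch x y u e
  rw [h.ur, h.ur] at this
  rw [cj_apply]
  simp only [map_sub, map_smul, h.ur, inner_sub_right, inner_smul_right]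
  linarith

theorem adj_l (h : CompAlg mul e) (u x y : O) :
    ⟪mul u x, y⟫_ℝ = ⟪x, mul (cj e u) y⟫_ℝ := by
  simpa using h.flip.adj_r x u y

theorem cj_cj (h : CompAlg mul e) (x : O) : cj e (cj e x) = x := by
  simp only [cj_apply, inner_sub_left, inner_smul_left, h.ee]
  simp only [conj_trivial, mul_one]
  module

theorem cj_inner (h : CompAlg mul e) (x y : O) : ⟪cj e x, cj e y⟫_ℝ = ⟪x, y⟫_ℝ := by
  simp only [cj_apply, inner_sub_left, inner_smul_left, inner_sub_right, inner_smul_right, h.ee]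
  simp only [conj_trivial, mul_one]
  rw [real_inner_comm y e]; ring

/-- Clifford relation. -/
theorem cliff1 (h : CompAlg mul e) (a b : O) :
    (mul (cj e a) : Module.End ℝ O) * mul b + mul (cj e b) * mul a
      = (2 * ⟪a, b⟫_ℝ) • (1 : Module.End ℝ O) := by
  ext x
  refine ext_inner_left ℝ fun v => ?_
  simp only [LinearMap.add_apply, Module.End.mul_apply, LinearMap.smul_apply, Module.End.one_apply,
    inner_add_right, inner_smul_right, ← h.adj_l]
  have := h.flip.exch v x a b
  simp only [LinearMap.flip_apply] at this
  linarith

theorem cliff2 (h : CompAlg mul e) (a b : O) :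
    (mul a : Module.End ℝ O) * mul (cj e b) + mul b * mul (cj e a)
      = (2 * ⟪a, b⟫_ℝ) • (1 : Module.End ℝ O) := by
  have := h.cliff1 (cj e a) (cj e b)
  rwa [h.cj_cj, h.cj_cj, h.cj_inner] at this

theorem tr2 (h : CompAlg mul e) (b : OrthonormalBasis (Fin 8) ℝ O) (p q : O) :
    LinearMap.trace ℝ O ((mul (cj e p) : Module.End ℝ O) * mul q) = 8 * ⟪p, q⟫_ℝ := by
  rw [LinearMap.trace_eq_sum_inner _ b]
  have : ∀ i, ⟪b i, ((mul (cj e p) : Module.End ℝ O) * mul q) (b i)⟫_ℝ = ⟪p, q⟫_ℝ := by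
    intro i
    rw [Module.End.mul_apply, ← h.adj_l]
    have := h.flip.inner_left (b i) p q
    simp only [LinearMap.flip_apply] at this
    simp [this]
  rw [Finset.sum_congr rfl fun i _ => this i]
  simp

theorem tr4_abs (L M : O →ₗ[ℝ] Module.End ℝ O) (B : OrthonormalBasis (Fin 8) ℝ O)
    (h1 : ∀ a b, M a * L b + M b * L a = (2 * ⟪a, b⟫_ℝ) • (1 : Module.End ℝ O))
    (h2 : ∀ a b, L a * M b + L b * M a = (2 * ⟪a, b⟫_ℝ) • (1 : Module.End ℝ O))
    (h3 : ∀ a b, LinearMap.trace ℝ O (M a * L b) = 8 * ⟪a, b⟫_ℝ) (a b c d : O) :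
    LinearMap.trace ℝ O (M a * L b * M c * L d)
      = 8 * (⟪a, b⟫_ℝ * ⟪c, d⟫_ℝ - ⟪a, c⟫_ℝ * ⟪b, d⟫_ℝ + ⟪a, d⟫_ℝ * ⟪b, c⟫_ℝ) := by
  set t : Module.End ℝ O →ₗ[ℝ] ℝ := LinearMap.trace ℝ O with ht
  have hc : ∀ x y, t (x * y) = t (y * x) := fun x y => LinearMap.trace_mul_comm ℝ x y
  -- swaps
  have s12 : ∀ a b c d, t (M a * L b * M c * L d) + t (M b * L a * M c * L d)
      = 16 * ⟪a, b⟫_ℝ * ⟪c, d⟫_ℝ := by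
    intro a b c d
    have : M a * L b * M c * L d + M b * L a * M c * L d = (2 * ⟪a, b⟫_ℝ) • (M c * L d) := by
      rw [← add_mul, ← add_mul, h1]; simp
    rw [← map_add, this, map_smul, h3, smul_eq_mul]; ring
  have s34 : ∀ a b c d, t (M a * L b * M c * L d) + t (M a * L b * M d * L c)
      = 16 * ⟪a, b⟫_ℝ * ⟪c, d⟫_ℝ := by
    intro a b c d
    have : M a * L b * M c * L d + M a * L b * M d * L c = (2 * ⟪c, d⟫_ℝ) • (M a * L b) := by
      rw [mul_assoc, mul_assoc (M a * L b), ← mul_add, h1]; simp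
    rw [← map_add, this, map_smul, h3, smul_eq_mul]; ring
  have s23 : ∀ a b c d, t (M a * L b * M c * L d) + t (M a * L c * M b * L d)
      = 16 * ⟪b, c⟫_ℝ * ⟪a, d⟫_ℝ := by
    intro a b c d
    have : M a * L b * M c * L d + M a * L c * M b * L d = (2 * ⟪b, c⟫_ℝ) • (M a * L d) := by
      rw [← add_mul, mul_assoc (M a), mul_assoc (M a), ← mul_add, h2]; simp
    rw [← map_add, this, map_smul, h3, smul_eq_mul]; ring
  -- push one basis vector through
  have push : ∀ m, t (M m * (L a * M b * L c * M d) * L m)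
      = 2 * ⟪m, a⟫_ℝ * t (M b * L c * M d * L m) - 2 * ⟪m, b⟫_ℝ * t (M a * L c * M d * L m)
        + 2 * ⟪m, c⟫_ℝ * t (M a * L b * M d * L m) - 2 * ⟪m, d⟫_ℝ * t (M a * L b * M c * L m)
        + t (M a * L b * M c * L d * (M m * L m)) := by
    intro m
    have e1 : M m * L a = (2 * ⟪m, a⟫_ℝ) • 1 - M a * L m := eq_sub_of_add_eq (h1 m a)
    have e2 : L m * M b = (2 * ⟪m, b⟫_ℝ) • 1 - L b * M m := eq_sub_of_add_eq (h2 m b)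
    have e3 : M m * L c = (2 * ⟪m, c⟫_ℝ) • 1 - M c * L m := eq_sub_of_add_eq (h1 m c)
    have e4 : L m * M d = (2 * ⟪m, d⟫_ℝ) • 1 - L d * M m := eq_sub_of_add_eq (h2 m d)
    have : M m * (L a * M b * L c * M d) * L m
      = (2 * ⟪m, a⟫_ℝ) • (M b * L c * M d * L m) - (2 * ⟪m, b⟫_ℝ) • (M a * L c * M d * L m)
        + (2 * ⟪m, c⟫_ℝ) • (M a * L b * M d * L m) - (2 * ⟪m, d⟫_ℝ) • (M a * L b * M c * L m)
        + M a * L b * M c * L d * (M m * L m) := by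
      calc M m * (L a * M b * L c * M d) * L m
          = (M m * L a) * M b * L c * M d * L m := by noncomm_ring
        _ = (2 * ⟪m, a⟫_ℝ) • (M b * L c * M d * L m) - M a * (L m * M b) * L c * M d * L m := by
            rw [e1]; simp only [sub_mul, smul_mul_assoc, one_mul, mul_assoc]
        _ = (2 * ⟪m, a⟫_ℝ) • (M b * L c * M d * L m) - (2 * ⟪m, b⟫_ℝ) • (M a * L c * M d * L m)
            + M a * L b * (M m * L c) * M d * L m := by
            rw [e2]; simp only [sub_mul, mul_sub, smul_mul_assoc, mul_smul_comm, one_mul, mul_one,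
              mul_assoc]; abel
        _ = (2 * ⟪m, a⟫_ℝ) • (M b * L c * M d * L m) - (2 * ⟪m, b⟫_ℝ) • (M a * L c * M d * L m)
            + (2 * ⟪m, c⟫_ℝ) • (M a * L b * M d * L m) - M a * L b * M c * (L m * M d) * L m := by
            rw [e3]; simp only [sub_mul, mul_sub, smul_mul_assoc, mul_smul_comm, one_mul, mul_one,
              mul_assoc]; abel
        _ = _ := by
            rw [e4]; simp only [sub_mul, mul_sub, smul_mul_assoc, mul_smul_comm, one_mul, mul_one,
              mul_assoc]; abel
    rw [this]
    simp only [map_add, map_sub, map_smul, smul_eq_mul]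
  have hML : ∀ i, M (B i) * L (B i) = 1 := by
    intro i
    have := h1 (B i) (B i)
    rw [real_inner_self_eq_norm_sq, B.norm_eq_one, ← two_smul ℝ] at this
    have h' := congrArg (fun z => (1 / 2 : ℝ) • z) this
    simpa [smul_smul] using h'
  have hLM : ∀ i, L (B i) * M (B i) = 1 := by
    intro i
    have := h2 (B i) (B i)
    rw [real_inner_self_eq_norm_sq, B.norm_eq_one, ← two_smul ℝ] at this
    have h' := congrArg (fun z => (1 / 2 : ℝ) • z) this
    simpa [smul_smul] using h'
  have lhs : ∀ i, t (M (B i) * (L a * M b * L c * M d) * L (B i)) = t (M b * L c * M d * L a) := by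
    intro i
    rw [mul_assoc, hc, mul_assoc, hLM, mul_one, mul_assoc, mul_assoc, hc]
    simp only [mul_assoc]
  have contr : ∀ (X : Module.End ℝ O) (v : O),
      ∑ i, 2 * ⟪B i, v⟫_ℝ * t (X * L (B i)) = 2 * t (X * L v) := by
    intro X v
    conv_rhs => rw [← B.sum_repr' v]
    simp only [map_sum, map_smul, Finset.mul_sum, mul_smul_comm, smul_eq_mul, mul_assoc]
  have total : ∑ i, t (M (B i) * (L a * M b * L c * M d) * L (B i))
      = 2 * t (M b * L c * M d * L a) - 2 * t (M a * L c * M d * L b)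
        + 2 * t (M a * L b * M d * L c) - 2 * t (M a * L b * M c * L d)
        + 8 * t (M a * L b * M c * L d) := by
    simp only [push, Finset.sum_add_distrib, Finset.sum_sub_distrib, contr, hML, mul_one]
    simp
  simp only [lhs, Finset.sum_const, Finset.card_univ, Fintype.card_fin, nsmul_eq_mul] at total
  push_cast at total
  have k1 := s12 a b c d
  have k2 := s23 b a c d
  have k3 := s34 b c a d
  have k4 := s23 a b c d
  have k5 := s34 a c b d
  have k6 := s34 a b c d
  linarith [real_inner_comm a b, real_inner_comm c b, real_inner_comm c d]

theorem tr4 (h : CompAlg mul e) (B : OrthonormalBasis (Fin 8) ℝ O) (y z p q : O) :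
    ∑ c, ⟪mul y (mul (cj e p) (B c)), mul z (mul (cj e q) (B c))⟫_ℝ
      = 8 * (⟪y, z⟫_ℝ * ⟪p, q⟫_ℝ + ⟪y, p⟫_ℝ * ⟪z, q⟫_ℝ - ⟪y, q⟫_ℝ * ⟪z, p⟫_ℝ) := by
  have key := tr4_abs (mul : O →ₗ[ℝ] Module.End ℝ O) (mul ∘ₗ cj e) B h.cliff1 h.cliff2 (h.tr2 B)
    p q z y
  rw [mul_assoc, mul_assoc, LinearMap.trace_mul_comm, LinearMap.trace_eq_sum_inner _ B] at key
  have : ∀ c, ⟪mul y (mul (cj e p) (B c)), mul z (mul (cj e q) (B c))⟫_ℝ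
      = ⟪B c, mul q (mul (cj e z) (mul y (mul (cj e p) (B c))))⟫_ℝ := by
    intro c
    rw [real_inner_comm, h.adj_l, h.adj_l, h.cj_cj]
  rw [Finset.sum_congr rfl fun c _ => this c]
  refine Eq.trans ?_ (key.trans ?_)
  · rfl
  · rw [real_inner_comm y z, real_inner_comm y p, real_inner_comm z q, real_inner_comm y q,
      real_inner_comm z p]
    ring

theorem cj_e (h : CompAlg mul e) : cj e e = e := by
  rw [cj_apply, h.ee]; module

theorem tr4' (h : CompAlg mul e) (B : OrthonormalBasis (Fin 8) ℝ O) (x u v : O) :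
    ∑ c, ⟪mul (mul (B c) x) v, mul (B c) u⟫_ℝ
      = 8 * (⟪v, u⟫_ℝ * ⟪x, e⟫_ℝ + ⟪v, cj e x⟫_ℝ * ⟪u, e⟫_ℝ - ⟪v, e⟫_ℝ * ⟪u, cj e x⟫_ℝ) := by
  have := h.flip.tr4 B v u (cj e x) e
  simp only [LinearMap.flip_apply, h.cj_cj, h.cj_e, h.ur] at this
  rw [this, ← h.cj_inner x e, h.cj_e]

theorem swap_mul (h : CompAlg mul e) (x c : O) :
    mul x c = (2 * ⟪c, e⟫_ℝ) • x + (2 * ⟪x, e⟫_ℝ) • c - (2 * ⟪c, x⟫_ℝ) • e - mul c x := by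
  have := congrArg (fun f : Module.End ℝ O => f e) (h.cliff2 x (cj e c))
  simp only [LinearMap.add_apply, Module.End.mul_apply, LinearMap.smul_apply, Module.End.one_apply,
    h.cj_cj, h.ur] at this
  simp only [cj_apply, inner_sub_right, inner_smul_right, map_sub, map_smul, LinearMap.sub_apply,
    LinearMap.smul_apply, h.ul, h.ur] at this
  rw [eq_sub_of_add_eq this, real_inner_comm c x]
  module

theorem tr3 (h : CompAlg mul e) (B : OrthonormalBasis (Fin 8) ℝ O) (x u v : O) :
    ∑ c, ⟪mul x (B c), mul (mul (B c) u) (cj e v)⟫_ℝ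
      = 4 * ⟪x, mul (cj e u) v⟫_ℝ + 4 * ⟪u, v⟫_ℝ * ⟪x, e⟫_ℝ := by
  have step : ∀ c, ⟪mul x (B c), mul (mul (B c) u) (cj e v)⟫_ℝ
      = 2 * (⟪e, B c⟫_ℝ * ⟪B c, mul (cj e (cj e (mul x v))) (cj e (cj e (cj e u)))⟫_ℝ)
        + 2 * ⟪x, e⟫_ℝ * ⟪v, u⟫_ℝ
        - 2 * (⟪x, B c⟫_ℝ * ⟪B c, mul v (cj e u)⟫_ℝ) - ⟪mul (mul (B c) x) v, mul (B c) u⟫_ℝ := by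
    intro c
    have h1 : ⟪mul (B c) v, mul (B c) u⟫_ℝ = ⟪v, u⟫_ℝ := by
      rw [h.inner_left, real_inner_self_eq_norm_sq, B.norm_eq_one]; ring
    rw [← h.adj_r, h.swap_mul x (B c)]
    simp only [map_sub, map_add, map_smul, LinearMap.sub_apply, LinearMap.add_apply,
      LinearMap.smul_apply, inner_sub_left, inner_add_left, inner_smul_left, h.ul, h1, h.cj_cj]
    rw [real_inner_comm (mul (B c) u) (mul x v), h.adj_r (B c) u (mul x v),
      real_inner_comm (mul (B c) u) v, h.adj_r (B c) u v, real_inner_comm (B c) e,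
      real_inner_comm (B c) x]
    simp only [conj_trivial]
    ring
  rw [Finset.sum_congr rfl fun c _ => step c]
  simp only [Finset.sum_sub_distrib, Finset.sum_add_distrib, ← Finset.mul_sum,
    B.sum_inner_mul_inner, h.tr4', h.cj_cj]
  simp only [Finset.sum_const, Finset.card_univ, Fintype.card_fin, nsmul_eq_mul]
  rw [real_inner_comm _ e, ← h.adj_r x u v] 
  have a1 := h.adj_r (mul x v) (cj e u) e
  rw [h.cj_cj, h.ul] at a1
  have a2 := h.adj_l x v u
  have a3 := h.adj_r u v x
  rw [a1]
  simp only [cj_apply, map_sub, map_smul, LinearMap.sub_apply, LinearMap.smul_apply,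
    inner_sub_right, inner_smul_right, h.ul, h.ur] at a2 a3 ⊢
  simp only [real_inner_comm x v, real_inner_comm x u, real_inner_comm u v,
    real_inner_comm (mul x v) u, real_inner_comm v (mul x u),
    real_inner_comm x (mul u v)] at a2 a3 ⊢
  push_cast
  linear_combination (-2) * a2 + 4 * a3

/-- The (traceless) bilinear map whose values on basis vectors are the generators. -/
noncomputable def Q (mul : O →ₗ[ℝ] O →ₗ[ℝ] O) (e : O) :
    O →ₗ[ℝ] O →ₗ[ℝ] ((O × O) →ₗ[ℝ] (O × O)) :=
  LinearMap.mk₂ ℝ (fun u v => LinearMap.prodMap ((mul.flip v) ∘ₗ mul.flip (cj e u))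
      ((mul.flip (cj e v)) ∘ₗ mul.flip u) - ⟪u, v⟫_ℝ • LinearMap.id)
    (by intro a b c; ext x <;> simp [inner_add_left, add_smul] <;> abel)
    (by intro r a c; ext x <;> simp [inner_smul_left, mul_smul, smul_sub])
    (by intro a b c; ext x <;> simp [inner_add_right, add_smul] <;> abel)
    (by intro r a c; ext x <;> simp [inner_smul_right, mul_smul, smul_sub])

theorem Q_apply (u v : O) (y : O × O) : Q mul e u v y
    = (mul (mul y.1 (cj e u)) v - ⟪u, v⟫_ℝ • y.1, mul (mul y.2 u) (cj e v) - ⟪u, v⟫_ℝ • y.2) := by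
  rfl

theorem Q_swap (h : CompAlg mul e) (u v : O) : Q mul e u v = - Q mul e v u := by
  have h1 := h.flip.cliff1 v u
  have h2 := h.flip.cliff2 v u
  refine LinearMap.ext fun y => ?_
  have h1' := congrArg (fun f : Module.End ℝ O => f y.2) h1
  have h2' := congrArg (fun f : Module.End ℝ O => f y.1) h2
  simp only [LinearMap.add_apply, Module.End.mul_apply, LinearMap.smul_apply, Module.End.one_apply,
    LinearMap.flip_apply] at h1' h2'
  rw [LinearMap.neg_apply, Q_apply, Q_apply, eq_sub_of_add_eq h1', eq_sub_of_add_eq h2',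
    real_inner_comm u v]
  ext
  · simp only [Prod.fst_neg]; module
  · simp only [Prod.snd_neg]; module

theorem skew (h : CompAlg mul e) {u v : O} (huv : ⟪u, v⟫_ℝ = 0) (y z : O) :
    ⟪mul (mul y u) (cj e v), z⟫_ℝ = - ⟪y, mul (mul z u) (cj e v)⟫_ℝ := by
  have h1 := h.exch y z u v
  rw [huv] at h1
  rw [h.adj_r, h.cj_cj, real_inner_comm _ y, h.adj_r (mul z u), h.cj_cj, real_inner_comm _ (mul z u)]
  linarith

/-- The space cut out by the relations. -/
def Rel (mul : O →ₗ[ℝ] O →ₗ[ℝ] O) (e : O) (b : OrthonormalBasis (Fin 8) ℝ O) :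
    Submodule ℝ ((O × O) →ₗ[ℝ] (O × O)) where
  carrier := {A | ((∀ p q : O × O,
        ⟪(A p).1, q.1⟫_ℝ + ⟪(A p).2, q.2⟫_ℝ = -(⟪p.1, (A q).1⟫_ℝ + ⟪p.2, (A q).2⟫_ℝ)) ∧
      (∀ y : O, (A (y, (0 : O))).2 = mul y ((A (e, (0 : O))).2)) ∧
      (∀ y : O, (A (y, (0 : O))).1 - mul y ((A (e, (0 : O))).1)
        = (A ((0 : O), y)).2 - mul y ((A ((0 : O), e)).2)) ∧
      (∀ x : O, ∑ c : Fin 8, ⟪mul x (b c), (A ((0 : O), b c)).2⟫_ℝ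
        = 4 * ⟪x, (A (e, (0 : O))).1⟫_ℝ))}
  zero_mem' := by simp
  add_mem' := by
    rintro A B ⟨a1, a2, a3, a4⟩ ⟨b1, b2, b3, b4⟩
    refine ⟨fun p q => ?_, fun y => ?_, fun y => ?_, fun x => ?_⟩
    · simp only [LinearMap.add_apply, Prod.fst_add, Prod.snd_add, inner_add_left, inner_add_right]
      linarith [a1 p q, b1 p q]
    · simp only [LinearMap.add_apply, Prod.snd_add, map_add, a2 y, b2 y]
    · simp only [LinearMap.add_apply, Prod.fst_add, Prod.snd_add, map_add]
      rw [add_sub_add_comm, a3, b3, add_sub_add_comm]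
    · simp only [LinearMap.add_apply, Prod.fst_add, Prod.snd_add, inner_add_right,
        Finset.sum_add_distrib, a4, b4, mul_add]
  smul_mem' := by
    rintro r A ⟨a1, a2, a3, a4⟩
    refine ⟨fun p q => ?_, fun y => ?_, fun y => ?_, fun x => ?_⟩
    · simp only [LinearMap.smul_apply, Prod.smul_fst, Prod.smul_snd, inner_smul_left,
        inner_smul_right, conj_trivial]
      linear_combination r * a1 p q
    · simp only [LinearMap.smul_apply, Prod.smul_snd, map_smul, a2 y]
    · simp only [LinearMap.smul_apply, Prod.smul_fst, Prod.smul_snd, map_smul]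
      rw [← smul_sub, a3, ← smul_sub]
    · simp only [LinearMap.smul_apply, Prod.smul_fst, Prod.smul_snd, inner_smul_right,
        ← Finset.mul_sum, a4]
      ring

theorem Q_rel (h : CompAlg mul e) (b : OrthonormalBasis (Fin 8) ℝ O) {u v : O}
    (huv : ⟪u, v⟫_ℝ = 0) (hu : cj e u = -u) (hv : cj e v = -v ∨ v = e) :
    Q mul e u v ∈ Rel mul e b := by
  refine ⟨fun p q => ?_, fun y => ?_, fun y => ?_, fun x => ?_⟩
  · have h1 := h.skew huv p.2 q.2
    have h2 := h.skew (u := cj e u) (v := cj e v) (by rw [h.cj_inner, huv]) p.1 q.1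
    rw [h.cj_cj] at h2
    simp only [Q_apply, huv, zero_smul, sub_zero, h1, h2]
    ring
  · simp [Q_apply]
  · simp only [Q_apply, huv, zero_smul, sub_zero, h.ul]
    rcases hv with hv | rfl
    · simp [hu, hv]
    · simp [h.ur, h.cj_e]
  · simp only [Q_apply, huv, zero_smul, sub_zero, h.ul, h.tr3]
    ring

end CompAlg

/-- An endomorphism `A` of `𝕆 ⊕ 𝕆` belongs to the Lie algebra `𝔰𝔭𝔦𝔫(9)`
(the span of the compositions `ℐ_i ∘ ℐ_j`, `i < j`, of the operators
`ℐ_i(y₀,y₁) = (y₁·e_i, y₀·ē_i)` and `ℐ₈(y₀,y₁) = (y₀, -y₁)`) if and only if `A` is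
skew-adjoint and its blocks satisfy `A₁₀(y) = y·A₁₀(1)`,
`A₀₀(y) − y·A₀₀(1) = A₁₁(y) − y·A₁₁(1)` and `Σ_c ⟨x e_c, A₁₁ e_c⟩ = 4⟨x, A₀₀(1)⟩`. -/
theorem mem_spin9_iff_relations
    {O : Type*} [NormedAddCommGroup O] [InnerProductSpace ℝ O]
    (hdim : Module.finrank ℝ O = 8)
    (mul : O →ₗ[ℝ] O →ₗ[ℝ] O) (e : O) (he : ‖e‖ = 1)
    (unit_left : ∀ x : O, mul e x = x) (unit_right : ∀ x : O, mul x e = x)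
    (norm_mul : ∀ x y : O, ‖mul x y‖ = ‖x‖ * ‖y‖)
    (conj : O → O) (hconj : ∀ x : O, conj x = (2 * ⟪x, e⟫_ℝ) • e - x)
    (b : OrthonormalBasis (Fin 8) ℝ O) (hb : b 0 = e)
    (J : Fin 9 → ((O × O) →ₗ[ℝ] (O × O)))
    (hJ : ∀ (i : Fin 8) (y : O × O),
      J i.castSucc y = (mul y.2 (b i), mul y.1 (conj (b i))))
    (hJ8 : ∀ y : O × O, J 8 y = (y.1, -y.2))
    (spin9 : Submodule ℝ ((O × O) →ₗ[ℝ] (O × O)))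
    (hspin9 : spin9 = Submodule.span ℝ
      {A : (O × O) →ₗ[ℝ] (O × O) | ∃ i j : Fin 9, i < j ∧ A = (J i).comp (J j)})
    (A : (O × O) →ₗ[ℝ] (O × O)) :
    A ∈ spin9 ↔
      ((∀ p q : O × O,
        ⟪(A p).1, q.1⟫_ℝ + ⟪(A p).2, q.2⟫_ℝ = -(⟪p.1, (A q).1⟫_ℝ + ⟪p.2, (A q).2⟫_ℝ)) ∧
      (∀ y : O, (A (y, (0 : O))).2 = mul y ((A (e, (0 : O))).2)) ∧
      (∀ y : O, (A (y, (0 : O))).1 - mul y ((A (e, (0 : O))).1)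
        = (A ((0 : O), y)).2 - mul y ((A ((0 : O), e)).2)) ∧
      (∀ x : O, ∑ c : Fin 8, ⟪mul x (b c), (A ((0 : O), b c)).2⟫_ℝ
        = 4 * ⟪x, (A (e, (0 : O))).1⟫_ℝ)) := by
  have h : CompAlg mul e := ⟨he, unit_left, unit_right, norm_mul⟩
  have hc : ∀ x, conj x = CompAlg.cj e x := fun x => by rw [hconj, CompAlg.cj_apply]
  have cjb : ∀ i : Fin 8, i ≠ 0 → CompAlg.cj e (b i) = - b i := by
    intro i hi
    rw [CompAlg.cj_apply, ← hb, b.inner_eq_zero hi]; simp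
  have hQ : ∀ i j : Fin 8, i ≠ j →
      (J i.castSucc).comp (J j.castSucc) = CompAlg.Q mul e (b j) (b i) := by
    intro i j hij
    refine LinearMap.ext fun y => ?_
    rw [LinearMap.comp_apply, hJ, hJ, CompAlg.Q_apply, b.inner_eq_zero hij.symm]
    simp [hc]
  have hQJ : ∀ i : Fin 8, ∀ y, ((J i.castSucc).comp (J (Fin.last 8))) y
      = (- mul y.2 (b i), mul y.1 (CompAlg.cj e (b i))) := by
    intro i y
    have : J (Fin.last 8) y = (y.1, -y.2) := hJ8 y
    rw [LinearMap.comp_apply, this, hJ, hc]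
    simp
  have fwd : spin9 ≤ CompAlg.Rel mul e b := by
    rw [hspin9, Submodule.span_le]
    rintro _ ⟨i, j, hij, rfl⟩
    induction j using Fin.lastCases with
    | last =>
      induction i using Fin.lastCases with
      | last => exact absurd hij (lt_irrefl _)
      | cast i =>
        refine ⟨fun p q => ?_, fun y => ?_, fun y => ?_, fun x => ?_⟩
        · simp only [hQJ, inner_neg_left, inner_neg_right]
          have w1 := h.adj_r q.1 (CompAlg.cj e (b i)) p.2
          have w2 := h.adj_r p.1 (CompAlg.cj e (b i)) q.2
          rw [h.cj_cj] at w1 w2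
          linarith [real_inner_comm (mul p.2 (b i)) q.1,
            real_inner_comm (mul q.1 (CompAlg.cj e (b i))) p.2]
        · simp only [hQJ, unit_left]
        · simp only [hQJ]; simp
        · simp only [hQJ]; simp
    | cast j =>
      induction i using Fin.lastCases with
      | last => exact absurd hij (not_lt.mpr (Fin.le_last _))
      | cast i =>
        have hij' : i < j := by simpa using hij
        rw [hQ i j hij'.ne]
        refine h.Q_rel b (b.inner_eq_zero hij'.ne') (cjb j ?_) ?_
        · exact fun h0 => by simp [h0] at hij'
        · by_cases hi : i = 0
          · right; rw [hi, hb]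
          · left; exact cjb i hi
  have Qmem : ∀ u v, CompAlg.Q mul e u v ∈ spin9 := by
    have lt_case : ∀ i j : Fin 8, i < j → CompAlg.Q mul e (b j) (b i) ∈ spin9 := by
      intro i j hij
      rw [← hQ i j hij.ne, hspin9]
      exact Submodule.subset_span ⟨_, _, by simpa using hij, rfl⟩
    have basis_case : ∀ i j : Fin 8, CompAlg.Q mul e (b j) (b i) ∈ spin9 := by
      intro i j
      rcases lt_trichotomy i j with hij | rfl | hij
      · exact lt_case i j hij
      · have := h.Q_swap (b i) (b i)
        have h2 : (2 : ℝ) • CompAlg.Q mul e (b i) (b i) = 0 := by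
          rw [two_smul]; exact add_eq_zero_iff_eq_neg.mpr this
        rw [(smul_eq_zero.mp h2).resolve_left two_ne_zero]; exact spin9.zero_mem
      · rw [h.Q_swap]; exact spin9.neg_mem (lt_case j i hij)
    intro u v
    rw [← b.sum_repr' u, ← b.sum_repr' v]
    simp only [map_sum, map_smul, LinearMap.sum_apply, LinearMap.smul_apply]
    exact Submodule.sum_mem _ fun i _ => Submodule.smul_mem _ _
      (Submodule.sum_mem _ fun j _ => Submodule.smul_mem _ _ (basis_case _ _))
  refine ⟨fun hA => fwd hA, fun hA => ?_⟩
  have hA' : A ∈ CompAlg.Rel mul e b := hA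
  -- the off-diagonal part
  obtain ⟨N, hN, hN'⟩ : ∃ N ∈ spin9, ∀ y, N y = (- mul y.2 (CompAlg.cj e (A (e, 0)).2),
      mul y.1 (A (e, 0)).2) := by
    set a := CompAlg.cj e (A (e, 0)).2 with ha
    have ha' : (A (e, 0)).2 = CompAlg.cj e a := by rw [ha, h.cj_cj]
    refine ⟨∑ i, ⟪b i, a⟫_ℝ • (J i.castSucc).comp (J (Fin.last 8)), ?_, ?_⟩
    · refine Submodule.sum_mem _ fun i _ => Submodule.smul_mem _ _ ?_
      rw [hspin9]
      exact Submodule.subset_span ⟨_, _, Fin.castSucc_lt_last i, rfl⟩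
    · intro y
      rw [ha']
      conv_rhs => rw [← b.sum_repr' a]
      simp only [LinearMap.sum_apply, LinearMap.smul_apply, hQJ, map_sum, map_smul]
      ext
      · simp [Prod.fst_sum]
      · simp [Prod.snd_sum]
  -- the diagonal part
  obtain ⟨C, hC, hC'⟩ : ∃ C ∈ spin9, (∀ y, (C (0, y)).2 = (A (0, y)).2) ∧
      (∀ y, (C (y, 0)).2 = 0) := by
    refine ⟨(1 / 16 : ℝ) • ∑ p, ∑ c, CompAlg.Q mul e (mul (CompAlg.cj e (b p)) (b c))
      (mul (CompAlg.cj e (A (0, b p)).2) (b c)), ?_, ?_, ?_⟩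
    · exact Submodule.smul_mem _ _ (Submodule.sum_mem _ fun p _ => Submodule.sum_mem _
        fun c _ => Qmem _ _)
    · intro y
      refine ext_inner_right ℝ fun z => ?_
      simp only [LinearMap.smul_apply, LinearMap.sum_apply, Prod.smul_snd, Prod.snd_sum,
        inner_smul_left, sum_inner, CompAlg.Q_apply, inner_sub_left, conj_trivial]
      have in1 : ∀ p : Fin 8, ∑ c, (⟪mul (mul y (mul (CompAlg.cj e (b p)) (b c)))
            (CompAlg.cj e (mul (CompAlg.cj e (A (0, b p)).2) (b c))), z⟫_ℝ
          - ⟪mul (CompAlg.cj e (b p)) (b c), mul (CompAlg.cj e (A (0, b p)).2) (b c)⟫_ℝ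
            * ⟪y, z⟫_ℝ) = 8 * (⟪y, b p⟫_ℝ * ⟪b p, -(A (0, z)).2⟫_ℝ)
              + 8 * (⟪z, b p⟫_ℝ * ⟪b p, (A (0, y)).2⟫_ℝ) := by
        intro p
        have sk : ∀ w, ⟪w, (A (0, b p)).2⟫_ℝ = - ⟪b p, (A (0, w)).2⟫_ℝ := by
          intro w
          have := hA.1 (0, b p) (0, w)
          simp only [inner_zero_left, inner_zero_right, zero_add] at this
          rw [real_inner_comm, this]
        have t1 : ∀ c, ⟪mul (CompAlg.cj e (b p)) (b c),
            mul (CompAlg.cj e (A (0, b p)).2) (b c)⟫_ℝ = ⟪b p, (A (0, b p)).2⟫_ℝ := by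
          intro c
          have := h.flip.inner_left (b c) (CompAlg.cj e (b p)) (CompAlg.cj e (A (0, b p)).2)
          simp only [LinearMap.flip_apply, h.cj_inner] at this
          rw [this, real_inner_self_eq_norm_sq, b.norm_eq_one]; ring
        have t2 : ∀ c, ⟪mul (mul y (mul (CompAlg.cj e (b p)) (b c)))
            (CompAlg.cj e (mul (CompAlg.cj e (A (0, b p)).2) (b c))), z⟫_ℝ
            = ⟪mul y (mul (CompAlg.cj e (b p)) (b c)),
              mul z (mul (CompAlg.cj e (A (0, b p)).2) (b c))⟫_ℝ := by
          intro c
          rw [h.adj_r, h.cj_cj]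
        simp only [t1, t2, Finset.sum_sub_distrib, h.tr4]
        simp only [Finset.sum_const, Finset.card_univ, Fintype.card_fin, nsmul_eq_mul,
          inner_neg_right]
        rw [sk y, sk z]
        push_cast
        ring
      rw [Finset.sum_congr rfl fun p _ => in1 p]
      simp only [Finset.sum_add_distrib, ← Finset.mul_sum, b.sum_inner_mul_inner]
      have := hA.1 (0, y) (0, z)
      simp only [inner_zero_left, inner_zero_right, zero_add] at this
      rw [inner_neg_right, real_inner_comm, real_inner_comm _ z]
      rw [real_inner_comm] at this ⊢
      linarith [real_inner_comm (A (0, z)).2 y, real_inner_comm (A (0, y)).2 z]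
    · intro y
      simp [Prod.snd_sum, CompAlg.Q_apply]
  have hs : C + N ∈ spin9 := spin9.add_mem hC hN
  have hD : A - (C + N) ∈ CompAlg.Rel mul e b := Submodule.sub_mem _ hA' (fwd hs)
  set D := A - (C + N) with hDdef
  suffices D = 0 by rw [sub_eq_zero.mp this]; exact hs
  obtain ⟨d1, d2, d3, d4⟩ := hD
  have z11 : ∀ y, (D (0, y)).2 = 0 := by
    intro y; simp [hDdef, hC'.1, hN']
  have z10 : ∀ y, (D (y, 0)).2 = 0 := by
    intro y
    rw [d2]; simp [hDdef, hC'.2, hN', unit_left]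
  have z00 : ∀ y, (D (y, 0)).1 = 0 := by
    have : (D (e, 0)).1 = 0 := by
      refine ext_inner_left ℝ fun x => ?_
      have := d4 x
      simp only [z11, inner_zero_right, Finset.sum_const_zero] at this
      rw [inner_zero_right]; linarith
    intro y
    have h3 := d3 y
    simpa [z11, this] using h3
  have z01 : ∀ y, (D (0, y)).1 = 0 := by
    intro y
    refine ext_inner_right ℝ fun x => ?_
    have := d1 (0, y) (x, 0)
    simpa [z10] using this
  refine LinearMap.ext fun y => ?_
  have : y = (y.1, 0) + (0, y.2) := by simp
  rw [this, map_add]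
  ext
  · simp [z00, z01]
  · simp [z10, z11]
end

section
/- Define π : 𝕆 × 𝕆 → 𝕆 by π(x, y) := ½(x·ȳ − y·x̄). Then: (i) π(x, y) ∈ Im 𝕆 for all x, y ∈ 𝕆; and (ii) π is Spin(7)-equivariant: for every g ∈ Spin(7) and all x, y ∈ 𝕆 one has π(g(x), g(y)) = χ_g(π(x, y)). -/
open scoped InnerProductSpace

/-- The map `π(x,y) = ½(x·ȳ − y·x̄)` takes values in `Im 𝕆` and is
`Spin(7)`-equivariant: `π(g x, g y) = χ_g(π(x,y))` for every `g ∈ Spin(7)`, where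
`χ_g(u) = g(u·g⁻¹(1))`. -/
theorem pi_imaginary_and_equivariant
    {O : Type*} [NormedAddCommGroup O] [InnerProductSpace ℝ O]
    (hdim : Module.finrank ℝ O = 8)
    (mul : O →ₗ[ℝ] O →ₗ[ℝ] O) (e : O) (he : ‖e‖ = 1)
    (unit_left : ∀ x : O, mul e x = x) (unit_right : ∀ x : O, mul x e = x)
    (norm_mul : ∀ x y : O, ‖mul x y‖ = ‖x‖ * ‖y‖)
    (conj : O → O) (hconj : ∀ x : O, conj x = (2 * ⟪x, e⟫_ℝ) • e - x)
    (Spin7 : Subgroup (O ≃ₗ[ℝ] O))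
    (hSpin7 : Spin7 = Subgroup.closure
      {g : O ≃ₗ[ℝ] O | ∃ u : O, ⟪u, e⟫_ℝ = 0 ∧ ‖u‖ = 1 ∧ ∀ x : O, g x = mul u x})
    (chi : (O ≃ₗ[ℝ] O) → O → O)
    (hchi : ∀ (g : O ≃ₗ[ℝ] O) (x : O), chi g x = g (mul x (g.symm e)))
    (pi : O → O → O)
    (hpi : ∀ x y : O, pi x y = (1 / 2 : ℝ) • (mul x (conj y) - mul y (conj x))) :
    (∀ x y : O, ⟪pi x y, e⟫_ℝ = 0) ∧
    (∀ g ∈ Spin7, ∀ x y : O, pi (g x) (g y) = chi g (pi x y)) := by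
  have N : ∀ x y : O, ⟪mul x y, mul x y⟫_ℝ = ⟪x, x⟫_ℝ * ⟪y, y⟫_ℝ := by
    intro x y
    simp only [real_inner_self_eq_norm_sq, norm_mul]
    ring
  have P1 : ∀ x y z : O, ⟪mul x y, mul x z⟫_ℝ = ⟪x, x⟫_ℝ * ⟪y, z⟫_ℝ := by
    intro x y z
    have h := N x (y + z)
    simp only [map_add, inner_add_left, inner_add_right] at h
    rw [real_inner_comm (mul x y) (mul x z), real_inner_comm y z] at h
    linear_combination (1 / 2) * h - (1 / 2) * N x y - (1 / 2) * N x z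
  have P2 : ∀ x y z w : O, ⟪mul x z, mul y w⟫_ℝ + ⟪mul x w, mul y z⟫_ℝ
      = 2 * ⟪x, y⟫_ℝ * ⟪z, w⟫_ℝ := by
    intro x y z w
    have h := P1 (x + y) z w
    simp only [map_add, LinearMap.add_apply, inner_add_left, inner_add_right] at h
    rw [real_inner_comm (mul x w) (mul y z), real_inner_comm x y] at h
    linear_combination h - P1 x z w - P1 y z w
  have R : ∀ x y z : O, ⟪mul x (conj y), z⟫_ℝ = ⟪x, mul z y⟫_ℝ := by
    intro x y z
    have h := P2 x z y e
    simp only [unit_right] at h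
    rw [hconj]
    simp only [map_sub, map_smul, unit_right, inner_sub_left, real_inner_smul_left]
    linear_combination -h
  have L : ∀ x y z : O, ⟪mul (conj x) y, z⟫_ℝ = ⟪y, mul x z⟫_ℝ := by
    intro x y z
    have h := P2 x e y z
    simp only [unit_left] at h
    rw [hconj, real_inner_comm (mul x z) y]
    simp only [map_sub, map_smul, LinearMap.sub_apply, LinearMap.smul_apply, unit_left,
      inner_sub_left, real_inner_smul_left]
    linear_combination -h
  have C : ∀ x y : O, ⟪conj x, y⟫_ℝ = ⟪x, conj y⟫_ℝ := by
    intro x y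
    simp only [hconj, inner_sub_left, inner_sub_right, real_inner_smul_left,
      real_inner_smul_right]
    rw [real_inner_comm y e]
    ring
  have CM : ∀ x y : O, conj (mul x (conj y)) = mul y (conj x) := by
    intro x y
    refine ext_inner_right ℝ fun t => ?_
    rw [C, R, R, real_inner_comm, L, real_inner_comm, real_inner_comm]
  have A : ∀ u w x : O, mul (conj u) (mul w x) + mul (conj w) (mul u x)
      = (2 * ⟪u, w⟫_ℝ) • x := by
    intro u w x
    refine ext_inner_right ℝ fun t => ?_
    rw [inner_add_left, L, L, real_inner_smul_left, add_comm,
      real_inner_comm (mul u t) (mul w x)]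
    exact P2 u w x t
  have key : ∀ g ∈ Spin7, ∃ c : O ≃ O, (∀ w x, g (mul w x) = mul (c w) (g x)) ∧
      ∀ x y, pi (g x) (g y) = c (pi x y) := by
    intro g hg
    rw [hSpin7] at hg
    induction hg using Subgroup.closure_induction with
    | one => exact ⟨Equiv.refl O, fun _ _ => rfl, fun _ _ => rfl⟩
    | mul g h _ _ ihg ihh =>
      obtain ⟨c, hc, hc'⟩ := ihg
      obtain ⟨d, hd, hd'⟩ := ihh
      refine ⟨d.trans c, fun w x => ?_, fun x y => ?_⟩
      · simp [LinearEquiv.mul_apply, hc, hd]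
      · simp [LinearEquiv.mul_apply, hc', hd']
    | inv g _ ih =>
      obtain ⟨c, hc, hc'⟩ := ih
      have hs : ∀ x, g (g⁻¹ x) = x := fun x => g.apply_symm_apply x
      refine ⟨c.symm, fun w x => ?_, fun x y => ?_⟩
      · apply g.injective
        rw [hs, hc, hs, c.apply_symm_apply]
      · apply c.injective
        rw [c.apply_symm_apply, ← hc', hs, hs]
    | mem g hg =>
      obtain ⟨u, hu, hn, hg⟩ := hg
      have huu : ⟪u, u⟫_ℝ = 1 := by rw [real_inner_self_eq_norm_sq, hn]; norm_num
      have cu : conj u = -u := by rw [hconj, hu]; simp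
      have uu : ∀ x, mul u (mul u x) = -x := by
        intro x
        have h := A u u x
        rw [cu, huu] at h
        simp only [map_neg, LinearMap.neg_apply] at h
        have h2 : (2 : ℝ) • mul u (mul u x) = (2 : ℝ) • (-x) := by
          rw [two_smul, smul_neg, ← neg_inj, neg_neg, neg_add, h]; norm_num
        exact smul_right_injective O (two_ne_zero : (2 : ℝ) ≠ 0) h2
      let c : O → O := fun w => conj w + (2 * ⟪w, u⟫_ℝ) • u
      have cc : Function.Involutive c := by
        intro w
        have hu' : ⟪e, u⟫_ℝ = 0 := by rw [real_inner_comm]; exact hu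
        have hee : ⟪e, e⟫_ℝ = 1 := by rw [real_inner_self_eq_norm_sq, he]; norm_num
        simp only [c, hconj, inner_add_left, inner_sub_left, real_inner_smul_left, hu, hu',
          hee, huu]
        module
      have cz : ∀ x y, mul (mul u x) (conj (mul u y)) = c (mul x (conj y)) := by
        intro x y
        refine ext_inner_right ℝ fun t => ?_
        have h := P2 u t x (mul u y)
        rw [uu, inner_neg_left] at h
        simp only [c]
        rw [R, inner_add_left, CM, R, R, real_inner_smul_left]
        linear_combination h
      refine ⟨cc.toPerm, fun w x => ?_, fun x y => ?_⟩
      · rw [hg, hg, Function.Involutive.coe_toPerm]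
        have h := A u w x
        rw [cu] at h
        simp only [c, map_add, map_smul, map_neg, LinearMap.neg_apply, LinearMap.add_apply,
          LinearMap.smul_apply, uu] at h ⊢
        rw [real_inner_comm u w]
        rw [smul_neg, ← h]
        abel
      · rw [hg, hg, Function.Involutive.coe_toPerm, hpi, hpi, cz, cz]
        simp only [c, hconj, inner_sub_left, real_inner_smul_left]
        module
  refine ⟨fun x y => ?_, fun g hg x y => ?_⟩
  · rw [hpi, real_inner_smul_left, inner_sub_left, R, R, unit_left, unit_left,
      real_inner_comm]
    ring
  · obtain ⟨c, hc, hc'⟩ := key g hg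
    rw [hc', hchi, hc, g.apply_symm_apply, unit_right]
end

section
/- For every u ∈ Im 𝕆 and every orthonormal basis f₀, f₁, …, f₇ of 𝕆 one has Σ_{i=0}^{7} ( (u·f_i)·\overline{f_i} − f_i·\overline{(u·f_i)} ) = 16·u. -/
open scoped InnerProductSpace

/-- For every imaginary octonion `u` and every orthonormal basis
`f₀, …, f₇` of `𝕆` one has `Σ_i ((u·f_i)·conj(f_i) − f_i·conj(u·f_i)) = 16·u`. -/
theorem sum_pi_of_left_mul
    {O : Type*} [NormedAddCommGroup O] [InnerProductSpace ℝ O]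
    (hdim : Module.finrank ℝ O = 8)
    (mul : O →ₗ[ℝ] O →ₗ[ℝ] O) (e : O) (he : ‖e‖ = 1)
    (unit_left : ∀ x : O, mul e x = x) (unit_right : ∀ x : O, mul x e = x)
    (norm_mul : ∀ x y : O, ‖mul x y‖ = ‖x‖ * ‖y‖)
    (conj : O → O) (hconj : ∀ x : O, conj x = (2 * ⟪x, e⟫_ℝ) • e - x)
    (u : O) (hu : ⟪u, e⟫_ℝ = 0)
    (f : OrthonormalBasis (Fin 8) ℝ O) :
    ∑ i : Fin 8, (mul (mul u (f i)) (conj (f i)) - mul (f i) (conj (mul u (f i))))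
      = (16 : ℝ) • u := by
  have hR : ∀ x z y : O, ⟪mul x y, mul z y⟫_ℝ = ⟪x, z⟫_ℝ * ‖y‖ ^ 2 := by
    intro x z y
    have h := norm_mul (x + z) y
    rw [map_add, LinearMap.add_apply] at h
    have h1 := norm_add_sq_real (mul x y) (mul z y)
    have h2 := norm_add_sq_real x z
    rw [h, norm_mul, norm_mul, mul_pow, h2] at h1
    linarith
  have hF : ∀ x z y w : O, ⟪mul x y, mul z w⟫_ℝ + ⟪mul x w, mul z y⟫_ℝ
      = 2 * ⟪x, z⟫_ℝ * ⟪y, w⟫_ℝ := by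
    intro x z y w
    have h := hR x z (y + w)
    rw [map_add, map_add, inner_add_left, inner_add_right, inner_add_right, hR, hR,
      norm_add_sq_real] at h
    linarith
  have hA : ∀ a y z : O, ⟪mul a (conj y), z⟫_ℝ = ⟪a, mul z y⟫_ℝ := by
    intro a y z
    have h := hF a z y e
    rw [unit_right, unit_right] at h
    rw [hconj, map_sub, map_smul, unit_right, inner_sub_left, real_inner_smul_left]
    linarith
  have hT : ∀ i : Fin 8, mul (mul u (f i)) (conj (f i)) - mul (f i) (conj (mul u (f i)))
      = (2 : ℝ) • u := by
    intro i
    have hn : ‖f i‖ = 1 := f.norm_eq_one i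
    refine ext_inner_right ℝ fun z => ?_
    have h1 := hF z e (f i) (mul u (f i))
    have h2 := hR u e (f i)
    have h3 := hR u z (f i)
    rw [unit_left] at h1 h2
    rw [unit_left, real_inner_comm (f i) (mul z (mul u (f i))),
      real_inner_comm (mul u (f i)) (f i)] at h1
    rw [hu] at h2
    rw [inner_sub_left, hA, hA, real_inner_smul_left, h3, hn]
    rw [real_inner_comm] at h3
    rw [hn] at h3
    have h4 : ⟪f i, mul u (f i)⟫_ℝ = 0 := by rw [real_inner_comm]; linarith
    rw [real_inner_comm] at h4
    simp only [real_inner_comm] at *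
    rw [h4] at h1
    linarith
  simp only [hT, Finset.sum_const, Finset.card_univ, Fintype.card_fin]
  rw [← Nat.cast_smul_eq_nsmul ℝ, smul_smul]
  norm_num
end

section
/- For all w, x, y, z ∈ 𝕆 one has Φ(w, x, y, z) = ⟨w, (x·ȳ)·z⟩ − ⟨w, x⟩·⟨y, z⟩ + ⟨w, y⟩·⟨x, z⟩ − ⟨w, z⟩·⟨x, y⟩. -/
open scoped InnerProductSpace

/-- For all `w, x, y, z ∈ 𝕆` the Cayley calibration
`Φ(w,x,y,z) = ⟨w, x × y × z⟩`, where `x × y × z = ½((x·ȳ)·z − (z·ȳ)·x)`, satisfies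
`Φ(w,x,y,z) = ⟨w,(x·ȳ)·z⟩ − ⟨w,x⟩⟨y,z⟩ + ⟨w,y⟩⟨x,z⟩ − ⟨w,z⟩⟨x,y⟩`. -/
theorem cayley_calibration_inner_formula
    {O : Type*} [NormedAddCommGroup O] [InnerProductSpace ℝ O]
    (hdim : Module.finrank ℝ O = 8)
    (mul : O →ₗ[ℝ] O →ₗ[ℝ] O) (e : O) (he : ‖e‖ = 1)
    (unit_left : ∀ x : O, mul e x = x) (unit_right : ∀ x : O, mul x e = x)
    (norm_mul : ∀ x y : O, ‖mul x y‖ = ‖x‖ * ‖y‖)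
    (conj : O → O) (hconj : ∀ x : O, conj x = (2 * ⟪x, e⟫_ℝ) • e - x)
    (cross : O → O → O → O)
    (hcross : ∀ x y z : O,
      cross x y z = (1 / 2 : ℝ) • (mul (mul x (conj y)) z - mul (mul z (conj y)) x))
    (Phi : O → O → O → O → ℝ)
    (hPhi : ∀ w x y z : O, Phi w x y z = ⟪w, cross x y z⟫_ℝ)
    (w x y z : O) :
    Phi w x y z = ⟪w, mul (mul x (conj y)) z⟫_ℝ - ⟪w, x⟫_ℝ * ⟪y, z⟫_ℝ
      + ⟪w, y⟫_ℝ * ⟪x, z⟫_ℝ - ⟪w, z⟫_ℝ * ⟪x, y⟫_ℝ := by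
  have n2 : ∀ a b : O, ⟪mul a b, mul a b⟫_ℝ = ⟪a, a⟫_ℝ * ⟪b, b⟫_ℝ := by
    intro a b
    simp only [real_inner_self_eq_norm_sq, norm_mul]
    ring
  have R : ∀ a c b : O, ⟪mul a b, mul c b⟫_ℝ = ⟪a, c⟫_ℝ * ⟪b, b⟫_ℝ := by
    intro a c b
    have h := n2 (a + c) b
    simp only [map_add, LinearMap.add_apply, inner_add_left, inner_add_right, n2] at h
    rw [real_inner_comm (mul a b) (mul c b), real_inner_comm a c] at h
    linarith
  have P : ∀ a b c d : O, ⟪mul a b, mul c d⟫_ℝ + ⟪mul a d, mul c b⟫_ℝ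
      = 2 * ⟪a, c⟫_ℝ * ⟪b, d⟫_ℝ := by
    intro a b c d
    have h := R a c (b + d)
    simp only [map_add, inner_add_left, inner_add_right, R] at h
    rw [real_inner_comm b d] at h
    linarith
  have hee : ⟪e, e⟫_ℝ = 1 := by
    rw [real_inner_self_eq_norm_sq, he]; norm_num
  have adj : ∀ a b c : O, ⟪a, mul c (conj b)⟫_ℝ = ⟪mul a b, c⟫_ℝ := by
    intro a b c
    have h := P a b c e
    rw [unit_right, unit_right] at h
    rw [hconj, map_sub, map_smul, unit_right, inner_sub_right, inner_smul_right]
    linarith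
  have cc : ∀ a : O, conj (conj a) = a := by
    intro a
    simp only [hconj, inner_sub_left, inner_smul_left, hee]
    simp
    module
  have adj' : ∀ a b c : O, ⟪a, mul c b⟫_ℝ = ⟪mul a (conj b), c⟫_ℝ := by
    intro a b c
    have h := adj a (conj b) c
    rwa [cc] at h
  have ci : ∀ a b : O, ⟪conj a, conj b⟫_ℝ = ⟪a, b⟫_ℝ := by
    intro a b
    simp only [hconj, inner_sub_left, inner_sub_right, real_inner_smul_left,
      real_inner_smul_right, hee]
    rw [real_inner_comm b e]
    ring
  have hA := adj' w z (mul x (conj y))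
  have hB := adj' w x (mul z (conj y))
  have h1 := P w (conj z) x (conj y)
  have h2 := P w (conj x) z (conj y)
  rw [ci] at h1 h2
  have h3 := P (mul w (conj y)) z e x
  have h4 := adj' w y e
  rw [unit_left, unit_left] at h3
  rw [unit_left] at h4
  have h5 := adj (mul w (conj y)) z x
  have h6 := adj (mul w (conj y)) x z
  rw [← h5, ← h6, ← h4] at h3
  rw [hPhi, hcross, real_inner_smul_right, inner_sub_right]
  rw [real_inner_comm y z, real_inner_comm x z] at *
  linarith
end

section
/- Let u ∈ Im 𝕆, let x₁, …, x₆ ∈ 𝕆, and let f₀, …, f₇ be an orthonormal basis of 𝕆. Then Σ_{i=0}^{7} Φ(u·f_i, x₁, x₂, x₃) · Φ(f_i, x₄, x₅, x₆) = −Φ(u·(x₁ × x₂ × x₃), x₄, x₅, x₆). -/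
open scoped InnerProductSpace

/-- For an imaginary octonion `u`, octonions `x₁, …, x₆` and an
orthonormal basis `f₀, …, f₇` of `𝕆`:
`Σ_i Φ(u·f_i, x₁, x₂, x₃)·Φ(f_i, x₄, x₅, x₆) = −Φ(u·(x₁ × x₂ × x₃), x₄, x₅, x₆)`. -/
theorem cayley_calibration_contraction
    {O : Type*} [NormedAddCommGroup O] [InnerProductSpace ℝ O]
    (hdim : Module.finrank ℝ O = 8)
    (mul : O →ₗ[ℝ] O →ₗ[ℝ] O) (e : O) (he : ‖e‖ = 1)
    (unit_left : ∀ x : O, mul e x = x) (unit_right : ∀ x : O, mul x e = x)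
    (norm_mul : ∀ x y : O, ‖mul x y‖ = ‖x‖ * ‖y‖)
    (conj : O → O) (hconj : ∀ x : O, conj x = (2 * ⟪x, e⟫_ℝ) • e - x)
    (cross : O → O → O → O)
    (hcross : ∀ x y z : O,
      cross x y z = (1 / 2 : ℝ) • (mul (mul x (conj y)) z - mul (mul z (conj y)) x))
    (Phi : O → O → O → O → ℝ)
    (hPhi : ∀ w x y z : O, Phi w x y z = ⟪w, cross x y z⟫_ℝ)
    (u : O) (hu : ⟪u, e⟫_ℝ = 0)
    (x₁ x₂ x₃ x₄ x₅ x₆ : O)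
    (f : OrthonormalBasis (Fin 8) ℝ O) :
    ∑ i : Fin 8, Phi (mul u (f i)) x₁ x₂ x₃ * Phi (f i) x₄ x₅ x₆
      = -Phi (mul u (cross x₁ x₂ x₃)) x₄ x₅ x₆ := by
  have diag : ∀ a : O, ⟪a, mul u a⟫_ℝ = 0 := by
    intro a
    have h1 : ‖a + mul u a‖ = ‖e + u‖ * ‖a‖ := by
      rw [← norm_mul, map_add, LinearMap.add_apply, unit_left]
    have h2 := norm_add_sq_real a (mul u a)
    have h3 := norm_add_sq_real e u
    rw [real_inner_comm, hu, he] at h3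
    rw [h1, mul_pow, h3, norm_mul] at h2
    linarith
  have skew : ∀ a b : O, ⟪mul u a, b⟫_ℝ = -⟪mul u b, a⟫_ℝ := by
    intro a b
    have h := diag (a + b)
    rw [map_add, inner_add_left, inner_add_right, inner_add_right, diag a, diag b] at h
    rw [real_inner_comm, real_inner_comm a (mul u b)]
    linarith
  simp only [hPhi]
  rw [← f.sum_inner_mul_inner, ← Finset.sum_neg_distrib]
  refine Finset.sum_congr rfl fun i _ => ?_
  rw [skew (f i)]
  ring
end

section
/- The Cayley calibration is Spin(7)-invariant: for every g ∈ Spin(7) and all w, x, y, z ∈ 𝕆 one has Φ(g(w), g(x), g(y), g(z)) = Φ(w, x, y, z). -/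
open scoped InnerProductSpace

/-- The Cayley calibration `Φ(w,x,y,z) = ⟨w, x × y × z⟩` is
`Spin(7)`-invariant: `Φ(g w, g x, g y, g z) = Φ(w, x, y, z)` for all `g ∈ Spin(7)`. -/
theorem cayley_calibration_spin7_invariant
    {O : Type*} [NormedAddCommGroup O] [InnerProductSpace ℝ O]
    (hdim : Module.finrank ℝ O = 8)
    (mul : O →ₗ[ℝ] O →ₗ[ℝ] O) (e : O) (he : ‖e‖ = 1)
    (unit_left : ∀ x : O, mul e x = x) (unit_right : ∀ x : O, mul x e = x)
    (norm_mul : ∀ x y : O, ‖mul x y‖ = ‖x‖ * ‖y‖)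
    (conj : O → O) (hconj : ∀ x : O, conj x = (2 * ⟪x, e⟫_ℝ) • e - x)
    (cross : O → O → O → O)
    (hcross : ∀ x y z : O,
      cross x y z = (1 / 2 : ℝ) • (mul (mul x (conj y)) z - mul (mul z (conj y)) x))
    (Phi : O → O → O → O → ℝ)
    (hPhi : ∀ w x y z : O, Phi w x y z = ⟪w, cross x y z⟫_ℝ)
    (Spin7 : Subgroup (O ≃ₗ[ℝ] O))
    (hSpin7 : Spin7 = Subgroup.closure
      {g : O ≃ₗ[ℝ] O | ∃ u : O, ⟪u, e⟫_ℝ = 0 ∧ ‖u‖ = 1 ∧ ∀ x : O, g x = mul u x}) :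
    ∀ g ∈ Spin7, ∀ w x y z : O, Phi (g w) (g x) (g y) (g z) = Phi w x y z := by
  have P0 : ∀ x y z : O, ⟪mul x y, mul x z⟫_ℝ = ‖x‖ ^ 2 * ⟪y, z⟫_ℝ := by
    intro x y z
    have h1 := norm_add_sq_real (mul x y) (mul x z)
    have h2 := norm_add_sq_real y z
    rw [← map_add, norm_mul, norm_mul, norm_mul] at h1
    linear_combination (-1 / 2 : ℝ) * h1 + (1 / 2 : ℝ) * ‖x‖ ^ 2 * h2
  have P : ∀ x y z w : O,
      ⟪mul x y, mul z w⟫_ℝ + ⟪mul x w, mul z y⟫_ℝ = 2 * ⟪x, z⟫_ℝ * ⟪y, w⟫_ℝ := by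
    intro x y z w
    have h1 := P0 (x + z) y w
    have h2 := P0 x y w
    have h3 := P0 z y w
    rw [norm_add_sq_real] at h1
    simp only [map_add, LinearMap.add_apply, inner_add_left, inner_add_right] at h1
    rw [real_inner_comm (mul x w) (mul z y)] at h1
    linear_combination h1 - h2 - h3
  have A1 : ∀ a x y : O, ⟪mul a x, y⟫_ℝ = ⟪x, mul (conj a) y⟫_ℝ := by
    intro a x y
    have h := P a x e y
    rw [unit_left, unit_left, real_inner_comm x (mul a y)] at h
    rw [hconj]
    simp only [map_sub, map_smul, LinearMap.sub_apply, LinearMap.smul_apply, unit_left,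
      inner_sub_right, inner_smul_right]
    linear_combination h
  have A2 : ∀ a x y : O, ⟪mul x a, y⟫_ℝ = ⟪x, mul y (conj a)⟫_ℝ := by
    intro a x y
    have h := P x a y e
    rw [unit_right, unit_right] at h
    rw [hconj]
    simp only [map_sub, map_smul, unit_right, inner_sub_right, inner_smul_right]
    linear_combination h
  have ee : ⟪e, e⟫_ℝ = 1 := by rw [real_inner_self_eq_norm_sq, he]; norm_num
  have cc : ∀ x : O, conj (conj x) = x := by
    intro x
    rw [hconj (conj x), hconj x]
    simp only [inner_sub_left, inner_smul_left, ee]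
    simp only [conj_trivial]
    module
  have ci : ∀ x y : O, ⟪conj x, y⟫_ℝ = ⟪x, conj y⟫_ℝ := by
    intro x y
    rw [hconj x, hconj y]
    simp only [inner_sub_left, inner_sub_right, inner_smul_left, inner_smul_right, conj_trivial]
    rw [real_inner_comm y e]
    ring
  have cm : ∀ x y : O, conj (mul x y) = mul (conj y) (conj x) := by
    intro x y
    refine ext_inner_right ℝ fun t => ?_
    rw [ci, A1, ← A2, A1, real_inner_comm, A1, cc]
  have Q : ∀ a u z : O, mul (conj a) (mul u z) + mul (conj u) (mul a z) =
      (2 * ⟪a, u⟫_ℝ) • z := by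
    intro a u z
    refine ext_inner_right ℝ fun t => ?_
    rw [inner_add_left, A1 (conj a), A1 (conj u), cc, cc, inner_smul_left]
    simp only [conj_trivial]
    have h := P a z u t
    rw [real_inner_comm (mul u z) (mul a t)] at h
    linear_combination h
  have key : ∀ u : O, ⟪u, e⟫_ℝ = 0 → ‖u‖ = 1 → ∀ x y z : O,
      mul (mul (mul u x) (conj (mul u y))) (mul u z) = mul u (mul (mul x (conj y)) z) := by
    intro u hu hn x y z
    have cu : conj u = -u := by rw [hconj, hu]; simp
    have uu : ∀ z, mul u (mul u z) = -z := by
      intro z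
      have h := Q u u z
      rw [real_inner_self_eq_norm_sq, hn, cu] at h
      simp only [map_neg, LinearMap.neg_apply] at h
      have h2 : (2 : ℝ) • (mul u (mul u z) + z) = 0 := by
        have : (2 : ℝ) • (mul u (mul u z)) = - ((2 * 1 ^ 2 : ℝ) • z) := by rw [← h]; module
        rw [smul_add, this]; module
      have h3 := (smul_eq_zero.mp h2).resolve_left (by norm_num)
      exact eq_neg_of_add_eq_zero_left h3
    have B : mul (mul u x) (conj (mul u y)) =
        (2 * ⟪mul x (conj y), u⟫_ℝ) • u + conj (mul x (conj y)) := by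
      refine ext_inner_right ℝ fun t => ?_
      have h := P u x t (mul u y)
      rw [uu] at h
      rw [inner_neg_left] at h
      rw [A2 (conj (mul u y)) (mul u x) t, cc, inner_add_left, inner_smul_left, cm, cc,
        A2 (conj x) y t, cc, A2 (conj y) x u, cc]
      simp only [conj_trivial]
      linear_combination h
    rw [B]
    have h := Q (mul x (conj y)) u z
    rw [cu] at h
    simp only [map_add, map_smul, map_neg, LinearMap.add_apply, LinearMap.smul_apply,
      LinearMap.neg_apply, uu] at h ⊢
    rw [← sub_eq_zero, ← sub_eq_zero.mpr h]
    module
  subst hSpin7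
  intro g hg
  induction hg using Subgroup.closure_induction with
  | mem g hg =>
    obtain ⟨u, hu, hn, hg⟩ := hg
    intro w x y z
    rw [hPhi, hPhi, hcross, hcross]
    simp only [hg, key u hu hn]
    rw [← map_sub, ← map_smul, P0, hn]
    ring
  | one => intros; rfl
  | mul a b _ _ ha hb =>
    intro w x y z
    simp only [LinearEquiv.mul_apply]
    rw [ha, hb]
  | inv a _ ha =>
    intro w x y z
    have hi : ∀ x, a (a⁻¹ x) = x := fun x => a.apply_symm_apply x
    rw [← ha]
    simp only [hi]
end

section
/- Let K be a field and 𝒜 = ⊕_{k≥0} 𝒜_k a commutative, associative, unital graded K-algebra generated by finitely many homogeneous elements ĝ₁, …, ĝ_m of positive degrees d₁, …, d_m. Let R = K[g₁, …, g_m] be the polynomial ring graded by deg g_i = d_i, and let x ↦ x̂ denote the graded K-algebra morphism R → 𝒜 sending g_i to ĝ_i. Write G_k = {g_i : d_i = k}, and construct inductively finite subsets A_k, B_k, F_k ⊆ R_k as follows: B₀ := {1}; A_k := {x·y : x ∈ B_l, y ∈ G_{k−l}, 0 ≤ l < k}; B_k = {x_{k,1}, …, x_{k,b_k}} is any maximal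 subset of A_k such that the images x̂_{k,1}, …, x̂_{k,b_k} are linearly independent in 𝒜_k; F_k := {x − Σ_{i=1}^{b_k} λ_{k,i}(x)·x_{k,i} : x ∈ A_k \ B_k}, where λ_{k,i}(x) ∈ K are the unique scalars with x̂ = Σ_{i=1}^{b_k} λ_{k,i}(x)·x̂_{k,i}. Let I ⊆ R be the ideal generated by ⋃_{k≥1} F_k. Then the morphism x ↦ x̂ descends to an isomorphism of graded K-algebras R/I ≅ 𝒜, and for each k the set {x̂ : x ∈ B_k} is a K-basis of 𝒜_k. -/
open MvPolynomial

/-- **Lemma 2.5.** Let `𝒜` be a commutative graded `K`-algebra generated by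
homogeneous elements `ĝ₁,…,ĝ_m` of positive degrees `d₁,…,d_m`, and let
`φ : K[g₁,…,g_m] → 𝒜` be the graded morphism `g_i ↦ ĝ_i` (where `deg g_i = d_i`).
Given data `A', B, F` satisfying the inductive construction of the lemma (with `B_k` a
maximal subset of `A_k` whose image is linearly independent and `F_k` the set of resulting
correction elements), and `I` the ideal generated by `⋃_{k≥1} F_k`, the morphism descends
to an isomorphism of graded algebras `R/I ≅ 𝒜` (i.e. `ker φ = I`, `φ` is surjective and
maps degree-`k` weighted-homogeneous polynomials into `𝒜_k`), and the image of `B_k` is a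
`K`-basis of `𝒜_k`. -/
theorem graded_algebra_presentation
    (K : Type*) [Field K] (A : Type*) [CommRing A] [Algebra K A]
    (𝒜 : ℕ → Submodule K A) [GradedAlgebra 𝒜]
    (m : ℕ) (d : Fin m → ℕ) (hd : ∀ i, 0 < d i)
    (g : Fin m → A) (hgmem : ∀ i, g i ∈ 𝒜 (d i))
    (hgen : Algebra.adjoin K (Set.range g) = ⊤)
    (φ : MvPolynomial (Fin m) K →ₐ[K] A) (hφ : ∀ i, φ (X i) = g i)
    (A' B F : ℕ → Set (MvPolynomial (Fin m) K))
    (hB0 : B 0 = {1})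
    (hA' : ∀ k, A' k = {z | ∃ (x : MvPolynomial (Fin m) K) (l : ℕ) (i : Fin m),
      x ∈ B l ∧ l + d i = k ∧ z = x * X i})
    (hBsub : ∀ k, 1 ≤ k → B k ⊆ A' k)
    (hBli : ∀ k, LinearIndependent K (fun x : B k => φ (x : MvPolynomial (Fin m) K)))
    (hBmax : ∀ k, ∀ x ∈ A' k, φ x ∈ Submodule.span K (φ '' B k))
    (hF : ∀ k, F k = {z | ∃ x ∈ A' k, x ∉ B k ∧ ∃ y ∈ Submodule.span K (B k),
      φ x = φ y ∧ z = x - y})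
    (I : Ideal (MvPolynomial (Fin m) K))
    (hI : I = Ideal.span {z | ∃ k, 1 ≤ k ∧ z ∈ F k}) :
    RingHom.ker φ.toRingHom = I ∧
    Function.Surjective φ ∧
    (∀ k, ∀ p ∈ weightedHomogeneousSubmodule K d k, φ p ∈ 𝒜 k) ∧
    (∀ k, Submodule.span K (φ '' B k) = 𝒜 k ∧
      LinearIndependent K (fun x : B k => φ (x : MvPolynomial (Fin m) K))) := by
  have hmon : ∀ (s : Fin m →₀ ℕ) (c : K),
      φ (monomial s c) ∈ 𝒜 (Finsupp.weight d s) := by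
    intro s c
    induction s using Finsupp.induction_linear generalizing c with
    | zero =>
      have : (monomial 0 c : MvPolynomial (Fin m) K) = algebraMap K _ c := rfl
      rw [this, AlgHom.commutes, map_zero, Algebra.algebraMap_eq_smul_one]
      exact Submodule.smul_mem _ _ (SetLike.GradedOne.one_mem)
    | add s t hs ht =>
      have : (monomial (s + t) c : MvPolynomial (Fin m) K) = monomial s c * monomial t 1 := by
        rw [monomial_mul, mul_one]
      rw [this, map_mul, map_add]
      exact SetLike.GradedMul.mul_mem (hs c) (ht 1)
    | single i n =>
      rw [← C_mul_X_pow_eq_monomial, map_mul, map_pow, hφ, Finsupp.weight_single]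
      have : (C c : MvPolynomial (Fin m) K) = algebraMap K _ c := rfl
      rw [this, AlgHom.commutes, ← Algebra.smul_def]
      exact Submodule.smul_mem _ _ (SetLike.pow_mem_graded n (hgmem i))
  have hhom : ∀ k, ∀ p ∈ weightedHomogeneousSubmodule K d k, φ p ∈ 𝒜 k := by
    intro k p hp
    rw [mem_weightedHomogeneousSubmodule] at hp
    rw [p.as_sum, map_sum]
    refine Submodule.sum_mem _ fun s hs => ?_
    have := hmon s (coeff s p)
    rwa [hp (mem_support_iff.mp hs)] at this
  have hsurj : Function.Surjective φ := by
    have h1 : Algebra.adjoin K (Set.range g) ≤ φ.range := by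
      rw [Algebra.adjoin_le_iff]
      rintro _ ⟨i, rfl⟩
      exact ⟨X i, hφ i⟩
    intro a
    have : a ∈ φ.range := h1 (by rw [hgen]; trivial)
    exact this
  have hproj : ∀ k p, (DirectSum.decompose 𝒜 (φ p) k : A) =
      φ (weightedHomogeneousComponent d k p) := by
    intro k p
    induction p using MvPolynomial.induction_on' with
    | monomial s c =>
      by_cases h : Finsupp.weight d s = k
      · subst h
        rw [DirectSum.decompose_of_mem_same _ (hmon s c),
          weightedHomogeneousComponent_of_mem (isWeightedHomogeneous_monomial d s c rfl), if_pos rfl]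
      · rw [DirectSum.decompose_of_mem_ne _ (hmon s c) h,
          weightedHomogeneousComponent_of_mem (isWeightedHomogeneous_monomial d s c rfl),
          if_neg (fun h' => h h'.symm), map_zero]
    | add p q hp hq =>
      rw [map_add, DirectSum.decompose_add, map_add, map_add, ← hp, ← hq]
      rfl
  have hBhom : ∀ k, ∀ x ∈ B k, x ∈ weightedHomogeneousSubmodule K d k := by
    intro k
    induction k using Nat.strong_induction_on with
    | _ k ih =>
      intro x hx
      rcases Nat.eq_zero_or_pos k with rfl | hk
      · rw [hB0] at hx
        rw [Set.mem_singleton_iff.mp hx]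
        exact isWeightedHomogeneous_one K d
      · have := hBsub k hk hx
        rw [hA'] at this
        obtain ⟨y, l, i, hy, rfl, rfl⟩ := this
        have := hd i
        exact (ih l (by omega) y hy).mul (isWeightedHomogeneous_X K d i)
  have hIker : ∀ p ∈ I, φ p = 0 := by
    have : I ≤ RingHom.ker φ := by
      rw [hI, Ideal.span_le]
      rintro z ⟨k, -, hz⟩
      rw [hF] at hz
      obtain ⟨x, -, -, y, -, hxy, rfl⟩ := hz
      simp [RingHom.mem_ker, hxy]
    exact fun p hp => this hp
  have hspan : ∀ (s : Fin m →₀ ℕ), (monomial s 1 : MvPolynomial (Fin m) K) ∈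
      I.restrictScalars K ⊔ Submodule.span K (B (Finsupp.weight d s)) := by
    have step : ∀ k i, ∀ p ∈ I.restrictScalars K ⊔ Submodule.span K (B k),
        p * X i ∈ I.restrictScalars K ⊔ Submodule.span K (B (k + d i)) := by
      intro k i p hp
      obtain ⟨a, ha, y, hy, rfl⟩ := Submodule.mem_sup.mp hp
      rw [add_mul]
      refine Submodule.add_mem _ (Submodule.mem_sup_left (I.mul_mem_right _ ha)) ?_
      clear hp
      induction hy using Submodule.span_induction with
      | zero => simp
      | add x y _ _ hx hy => rw [add_mul]; exact Submodule.add_mem _ hx hy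
      | smul c x _ hx => rw [smul_mul_assoc]; exact Submodule.smul_mem _ _ hx
      | mem x hx =>
        have hxA : x * X i ∈ A' (k + d i) := by
          rw [hA']; exact ⟨x, k, i, hx, rfl, rfl⟩
        by_cases hxB : x * X i ∈ B (k + d i)
        · exact Submodule.mem_sup_right (Submodule.subset_span hxB)
        · have h1 := hBmax _ _ hxA
          have h2 : φ '' B (k + d i) = φ.toLinearMap '' B (k + d i) := rfl
          rw [h2, Submodule.span_image] at h1
          obtain ⟨y, hy, hyx⟩ := h1
          have h3 : x * X i - y ∈ I := by
            rw [hI]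
            refine Ideal.subset_span ⟨k + d i, ?_, ?_⟩
            · have := hd i
              omega
            · rw [hF]
              exact ⟨_, hxA, hxB, y, hy, hyx.symm, rfl⟩
          exact Submodule.mem_sup.mpr ⟨_, h3, y, hy, by ring⟩
    have key : ∀ (n : ℕ) (s : Fin m →₀ ℕ), s.degree = n →
      (monomial s 1 : MvPolynomial (Fin m) K) ∈
        I.restrictScalars K ⊔ Submodule.span K (B (Finsupp.weight d s)) := by
      intro n
      induction n with
      | zero =>
        intro s hs
        rw [Finsupp.degree_eq_zero_iff] at hs
        subst hs
        rw [map_zero, hB0]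
        exact Submodule.mem_sup_right (Submodule.subset_span rfl)
      | succ n ih =>
        intro s hs
        have hs0 : s ≠ 0 := by
          rintro rfl
          simp at hs
        obtain ⟨i, hi⟩ := Finsupp.ne_iff.mp hs0
        have hle : Finsupp.single i 1 ≤ s := by
          rw [Finsupp.single_le_iff]
          exact Nat.one_le_iff_ne_zero.mpr hi
        obtain ⟨t, rfl⟩ := exists_add_of_le hle
        rw [add_comm] at hs ⊢
        have ht : t.degree = n := by
          simpa using hs
        have := step _ i _ (ih t ht)
        rw [map_add, Finsupp.weight_single]
        simpa [X, monomial_mul] using this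
    exact fun s => key _ s rfl
  have hspan' : ∀ k, ∀ p ∈ weightedHomogeneousSubmodule K d k,
      p ∈ I.restrictScalars K ⊔ Submodule.span K (B k) := by
    intro k p hp
    rw [mem_weightedHomogeneousSubmodule] at hp
    rw [p.as_sum]
    refine Submodule.sum_mem _ fun s hs => ?_
    have h1 := hspan s
    rw [hp (mem_support_iff.mp hs)] at h1
    have h2 := Submodule.smul_mem _ (coeff s p) h1
    rwa [smul_monomial, smul_eq_mul, mul_one] at h2
  have hinj : ∀ k, ∀ y ∈ Submodule.span K (B k), φ y = 0 → y = 0 := by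
    intro k y hy h0
    have h1 : LinearIndependent K (φ.toLinearMap ∘ (Subtype.val : B k → MvPolynomial (Fin m) K)) :=
      hBli k
    have h2 := Submodule.range_ker_disjoint h1
    rw [Subtype.range_coe] at h2
    exact Submodule.disjoint_def.mp h2 y hy h0
  refine ⟨?_, hsurj, hhom, fun k => ⟨le_antisymm ?_ ?_, hBli k⟩⟩
  · apply le_antisymm
    · intro p hp
      have hp0 : φ p = 0 := hp
      rw [← sum_weightedHomogeneousComponent d p]
      refine finsum_induction (· ∈ I) I.zero_mem (fun _ _ => I.add_mem) fun k => ?_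
      have h0 : φ (weightedHomogeneousComponent d k p) = 0 := by
        rw [← hproj, hp0]; simp
      obtain ⟨a, ha, y, hy, hay⟩ := Submodule.mem_sup.mp
        (hspan' k _ (weightedHomogeneousComponent_mem d p k))
      have hy0 : φ y = 0 := by
        rw [← hay, map_add, hIker a ha, zero_add] at h0
        exact h0
      rw [← hay, hinj k y hy hy0, add_zero]
      exact ha
    · exact fun p hp => hIker p hp
  · rw [Submodule.span_le]
    rintro _ ⟨x, hx, rfl⟩
    exact hhom k x (hBhom k x hx)
  · intro a ha
    obtain ⟨p, rfl⟩ := hsurj a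
    have h1 := hproj k p
    rw [DirectSum.decompose_of_mem_same _ ha] at h1
    obtain ⟨a, ha, y, hy, hay⟩ := Submodule.mem_sup.mp
      (hspan' k _ (weightedHomogeneousComponent_mem d p k))
    rw [h1, ← hay, map_add, hIker a ha, zero_add]
    have h2 : φ '' B k = φ.toLinearMap '' B k := rfl
    rw [h2, Submodule.span_image]
    exact ⟨y, hy, rfl⟩
end

section
/- Let K be a field and 𝒜 = ⊕_{k≥0} 𝒜_k a commutative, associative, unital graded K-algebra generated by finitely many homogeneous elements ĝ₁, …, ĝ_m of positive degrees d₁, …, d_m; let R = K[g₁, …, g_m] be graded by deg g_i = d_i, with graded morphism x ↦ x̂ : R → 𝒜, g_i ↦ ĝ_i, and G_k = {g_i : d_i = k}. Fix a monomial order on R, i.e. a total order on the monomials of R such that m₁ < m₂ implies m₁·n < m₂·n for every monomial n; extend it to finite sets of monomials of equal cardinality by comparing their decreasing rearrangements lexicographically. Construct inductively: B₀ := {1}; A_k := {x·y : x ∈ B_l, y ∈ G_{k−l}, 0 ≤ l < k} \ {u·v : u ∈ A_m \ B_m, v ∈ G_{k−m}, 0 < m < k}; B_k = {x_{k,1}, …,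 x_{k,b_k}} ⊆ A_k a maximal subset whose image under x ↦ x̂ is linearly independent in 𝒜_k, chosen of maximal order among all such subsets; F_k := {x − Σ_{i=1}^{b_k} λ_{k,i}(x)·x_{k,i} : x ∈ A_k \ B_k}, where λ_{k,i}(x) ∈ K are the unique scalars with x̂ = Σ_{i=1}^{b_k} λ_{k,i}(x)·x̂_{k,i}. Then, with I ⊆ R the ideal generated by ⋃_{k≥1} F_k, the morphism x ↦ x̂ descends to an isomorphism of graded K-algebras R/I ≅ 𝒜, and {x̂ : x ∈ B_k} is a K-basis of 𝒜_k for each k. -/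
open MvPolynomial

/-- A polynomial is a (monic) monomial. -/
def IsMonicMonomial {K : Type*} [CommSemiring K] {m : ℕ}
    (p : MvPolynomial (Fin m) K) : Prop :=
  ∃ a : Fin m →₀ ℕ, p = monomial a 1

/-- Extension of a (monomial) order to finite sets of monomials of equal cardinality, by
comparing decreasing rearrangements lexicographically: `T ≤ S` holds iff `T = S` or the
largest element of the symmetric difference of `S` and `T` belongs to `S`. -/
def SetLE {R : Type*} (lt : R → R → Prop) (T S : Set R) : Prop :=
  T = S ∨ ∃ x ∈ S, x ∉ T ∧
    ∀ y, ((y ∈ S ∧ y ∉ T) ∨ (y ∈ T ∧ y ∉ S)) → (y = x ∨ lt y x)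

/-- Exchange argument: an element outside a maximal-order maximal independent set is a
combination of larger elements. -/
theorem greedy_exchange {K M V : Type*} [Field K] [AddCommGroup M] [Module K M]
    [AddCommGroup V] [Module K V] (f : M →ₗ[K] V) (lt : M → M → Prop)
    (htrans : ∀ a b c, lt a b → lt b c → lt a c) (hirr : ∀ a, ¬ lt a a)
    (S B : Set M) (hsub : B ⊆ S) (li : LinearIndepOn K f B)
    (hmax : ∀ x ∈ S, f x ∈ Submodule.span K (f '' B))
    (hord : ∀ B' : Set M, B' ⊆ S → LinearIndepOn K f B' →
      (∀ x ∈ S, f x ∈ Submodule.span K (f '' B')) → SetLE lt B' B)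
    (x : M) (hx : x ∈ S) (hxB : x ∉ B) (htot : ∀ b ∈ B, lt x b ∨ lt b x) :
    ∃ y ∈ Submodule.span K {z | z ∈ B ∧ lt x z}, f x = f y := by
  classical
  have h := hmax x hx
  rw [← Submodule.map_span] at h
  obtain ⟨y, hy, hyx⟩ := h
  refine ⟨y, ?_, hyx.symm⟩
  obtain ⟨c, hc, rfl⟩ := Submodule.mem_span_set.1 hy
  refine Submodule.sum_mem _ fun b hb => Submodule.smul_mem _ _ (Submodule.subset_span ?_)
  have hbB : b ∈ B := hc hb
  refine ⟨hbB, ?_⟩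
  rcases htot b hbB with h | hlt
  · exact h
  exfalso
  have hcb : c b ≠ 0 := Finsupp.mem_support_iff.1 hb
  set T := B \ {b} with hT
  have hins : insert b T = B := by rw [hT, Set.insert_sdiff_singleton, Set.insert_eq_of_mem hbB]
  have hbT : b ∉ T := by simp [hT]
  have liT : LinearIndepOn K f T := li.mono Set.sdiff_subset
  have hbs : f b ∉ Submodule.span K (f '' T) := by
    rw [← hins] at li
    exact ((linearIndepOn_insert hbT).1 li).2
  have hxin : f x ∈ Submodule.span K (insert (f b) (f '' T)) := by
    rw [← Set.image_insert_eq, hins]; exact hmax x hx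
  have hxs : f x ∉ Submodule.span K (f '' T) := by
    intro hh
    apply hbs
    have e : f x = c b • f b + f ((c.erase b).sum fun mi r => r • mi) := by
      rw [← hyx, ← Finsupp.add_sum_erase c b _ hb, map_add, map_smul]
    have h2 : f ((c.erase b).sum fun mi r => r • mi) ∈ Submodule.span K (f '' T) := by
      rw [← Submodule.map_span]
      refine Submodule.mem_map_of_mem (Submodule.sum_mem _ fun z hz =>
        Submodule.smul_mem _ _ (Submodule.subset_span ?_))
      rw [Finsupp.support_erase, Finset.mem_erase] at hz
      exact ⟨hc hz.2, hz.1⟩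
    have h3 : c b • f b ∈ Submodule.span K (f '' T) := by
      have := Submodule.sub_mem _ hh h2
      rwa [e, add_sub_cancel_right] at this
    exact (Submodule.smul_mem_iff _ hcb).1 h3
  have hbin := mem_span_insert_exchange hxin hxs
  have key := hord (insert x T)
    (Set.insert_subset hx (Set.sdiff_subset.trans hsub)) (liT.insert hxs) (by
      intro z hz
      refine Submodule.span_le.2 ?_ (hmax z hz)
      rw [← hins, Set.image_insert_eq, Set.image_insert_eq]
      refine Set.insert_subset hbin ?_
      exact (Set.subset_insert _ _).trans Submodule.subset_span)
  rcases key with key | ⟨w, hw, hwT, hall⟩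
  · exact hxB (key ▸ Set.mem_insert x T)
  · have hwb : w = b := by
      by_contra hne
      exact hwT (Set.mem_insert_of_mem _ ⟨hw, hne⟩)
    subst hwb
    rcases hall x (Or.inr ⟨Set.mem_insert x T, hxB⟩) with h | h
    · exact hxB (h ▸ hw)
    · exact hirr _ (htrans _ _ _ h hlt)

/-- **Corollary 2.6.** The conclusion of Lemma 2.5 (see Statement 16) still
holds when `A_k` is replaced by
`{x·y : x ∈ B_l, y ∈ G_{k−l}} \ {u·v : u ∈ A_m \ B_m, v ∈ G_{k−m}, 0 < m < k}` and `B_k`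
is chosen of maximal order (with respect to a fixed monomial order, extended to sets of
monomials) among the maximal subsets of `A_k` with linearly independent image. -/
theorem graded_algebra_presentation_with_monomial_order
    (K : Type*) [Field K] (A : Type*) [CommRing A] [Algebra K A]
    (𝒜 : ℕ → Submodule K A) [GradedAlgebra 𝒜]
    (m : ℕ) (d : Fin m → ℕ) (hd : ∀ i, 0 < d i)
    (g : Fin m → A) (hgmem : ∀ i, g i ∈ 𝒜 (d i))
    (hgen : Algebra.adjoin K (Set.range g) = ⊤)
    (φ : MvPolynomial (Fin m) K →ₐ[K] A) (hφ : ∀ i, φ (X i) = g i)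
    -- a monomial order:
    (lt : MvPolynomial (Fin m) K → MvPolynomial (Fin m) K → Prop)
    (hlt_trans : ∀ a b c, lt a b → lt b c → lt a c)
    (hlt_irrefl : ∀ a, ¬ lt a a)
    (hlt_total : ∀ a b : Fin m →₀ ℕ,
      a = b ∨ lt (monomial a (1 : K)) (monomial b 1) ∨ lt (monomial b 1) (monomial a 1))
    (hlt_mul : ∀ a b c : Fin m →₀ ℕ, lt (monomial a (1 : K)) (monomial b 1) →
      lt (monomial (a + c) 1) (monomial (b + c) 1))
    (A' B F : ℕ → Set (MvPolynomial (Fin m) K))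
    (hB0 : B 0 = {1})
    (hA' : ∀ k, A' k =
      {z | ∃ (x : MvPolynomial (Fin m) K) (l : ℕ) (i : Fin m),
        x ∈ B l ∧ l + d i = k ∧ z = x * X i} \
      {z | ∃ (u : MvPolynomial (Fin m) K) (n : ℕ) (i : Fin m),
        u ∈ A' n ∧ u ∉ B n ∧ 1 ≤ n ∧ n + d i = k ∧ z = u * X i})
    (hBsub : ∀ k, 1 ≤ k → B k ⊆ A' k)
    (hBli : ∀ k, LinearIndependent K (fun x : B k => φ (x : MvPolynomial (Fin m) K)))
    (hBmax : ∀ k, ∀ x ∈ A' k, φ x ∈ Submodule.span K (φ '' B k))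
    -- `B k` has maximal order among all maximal independent subsets of `A' k`:
    (hBord : ∀ k, 1 ≤ k → ∀ B' : Set (MvPolynomial (Fin m) K), B' ⊆ A' k →
      LinearIndependent K (fun x : B' => φ (x : MvPolynomial (Fin m) K)) →
      (∀ x ∈ A' k, φ x ∈ Submodule.span K (φ '' B')) →
      SetLE lt B' (B k))
    (hF : ∀ k, F k = {z | ∃ x ∈ A' k, x ∉ B k ∧ ∃ y ∈ Submodule.span K (B k),
      φ x = φ y ∧ z = x - y})
    (I : Ideal (MvPolynomial (Fin m) K))
    (hI : I = Ideal.span {z | ∃ k, 1 ≤ k ∧ z ∈ F k}) :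
    RingHom.ker φ.toRingHom = I ∧
    Function.Surjective φ ∧
    (∀ k, ∀ p ∈ weightedHomogeneousSubmodule K d k, φ p ∈ 𝒜 k) ∧
    (∀ k, Submodule.span K (φ '' B k) = 𝒜 k ∧
      LinearIndependent K (fun x : B k => φ (x : MvPolynomial (Fin m) K))) := by
  classical
  have hd0 : ∀ i, d i ≠ 0 := fun i => (hd i).ne'
  have hBmon : ∀ k, ∀ x ∈ B k, ∃ a : Fin m →₀ ℕ, Finsupp.weight d a = k ∧ x = monomial a 1 := by
    intro k
    induction k using Nat.strong_induction_on with
    | _ k ih =>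
      intro x hx
      rcases Nat.eq_zero_or_pos k with rfl | hk
      · rw [hB0] at hx
        exact ⟨0, by simp, by simpa using hx⟩
      · have := hBsub k hk hx
        rw [hA'] at this
        obtain ⟨⟨y, l, i, hy, hl, rfl⟩, -⟩ := this
        obtain ⟨a, ha, rfl⟩ := ih l (by have := hd i; omega) y hy
        refine ⟨a + Finsupp.single i 1, ?_, ?_⟩
        · rw [map_add, ha, Finsupp.weight_single]; simpa using hl
        · rw [X, monomial_mul, one_mul]
  have hFI : ∀ k, 1 ≤ k → ∀ x ∈ A' k, x ∉ B k → ∀ y ∈ Submodule.span K (B k), φ x = φ y →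
      x - y ∈ I := by
    intro k hk x hx hxB y hy hxy
    rw [hI]
    refine Ideal.subset_span ⟨k, hk, ?_⟩
    rw [hF]
    exact ⟨x, hx, hxB, y, hy, hxy, rfl⟩
  have hker : ∀ p ∈ I, φ p = 0 := by
    have : I ≤ RingHom.ker φ.toRingHom := by
      rw [hI, Ideal.span_le]
      rintro z ⟨k, -, hz⟩
      rw [hF] at hz
      obtain ⟨x, -, -, y, -, hxy, rfl⟩ := hz
      change φ (x - y) = 0
      rw [map_sub, hxy, sub_self]
    exact fun p hp => this hp
  have main : ∀ k, ∀ a : Fin m →₀ ℕ, Finsupp.weight d a = k → monomial a (1 : K) ∉ B k →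
      ∃ y ∈ Submodule.span K {z | z ∈ B k ∧ lt (monomial a 1) z}, monomial a 1 - y ∈ I := by
    intro k
    induction k using Nat.strong_induction_on with
    | _ k ih =>
      have : Finite {a : Fin m →₀ ℕ // Finsupp.weight d a = k} :=
        (Finsupp.finite_of_nat_weight_eq d hd0 k).to_subtype
      let r : {a : Fin m →₀ ℕ // Finsupp.weight d a = k} →
        {a : Fin m →₀ ℕ // Finsupp.weight d a = k} → Prop :=
        fun a b => lt (monomial b.1 1) (monomial a.1 1)
      have : IsTrans _ r := ⟨fun a b c hab hbc => hlt_trans _ _ _ hbc hab⟩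
      have : Std.Irrefl r := ⟨fun a => hlt_irrefl _⟩
      have wf : WellFounded r := Finite.wellFounded_of_trans_of_irrefl r
      suffices H : ∀ a : {a : Fin m →₀ ℕ // Finsupp.weight d a = k}, monomial a.1 (1 : K) ∉ B k →
        ∃ y ∈ Submodule.span K {z | z ∈ B k ∧ lt (monomial a.1 1) z}, monomial a.1 1 - y ∈ I from
        fun a ha => H ⟨a, ha⟩
      intro a
      induction a using wf.induction with
      | _ a ih2 =>
        obtain ⟨a, ha⟩ := a
        intro haB
        simp only at haB ⊢
        have hk : 1 ≤ k := by
          by_contra hk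
          have hk0 : k = 0 := by omega
          subst hk0
          have ha0 : a = 0 := by
            by_contra hne
            obtain ⟨i, hi⟩ := Finsupp.ne_iff.1 hne
            have := Finsupp.le_weight_of_ne_zero' d hi
            have := hd i
            omega
          apply haB
          rw [hB0, ha0]; simp
        by_cases haA : monomial a (1 : K) ∈ A' k
        · obtain ⟨y, hy, hxy⟩ := greedy_exchange φ.toLinearMap lt hlt_trans hlt_irrefl (A' k) (B k)
            (hBsub k hk) (hBli k) (hBmax k) (hBord k hk) (monomial a 1) haA haB (by
              intro b hb
              obtain ⟨b, -, rfl⟩ := hBmon k b hb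
              rcases hlt_total a b with rfl | h
              · exact absurd hb haB
              · exact h)
          exact ⟨y, hy, hFI k hk _ haA haB y (Submodule.span_mono (fun z hz => hz.1) hy) hxy⟩
        · obtain ⟨v, n, i, hv, hn, hvB, hav⟩ : ∃ (v : Fin m →₀ ℕ) (n : ℕ) (i : Fin m),
              Finsupp.weight d v = n ∧ n + d i = k ∧ monomial v (1 : K) ∉ B n ∧
              a = v + Finsupp.single i 1 := by
            have hne : a ≠ 0 := by
              rintro rfl
              simp at ha
              omega
            obtain ⟨i, hi⟩ := Finsupp.ne_iff.1 hne
            simp only [Finsupp.coe_zero, Pi.zero_apply] at hi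
            have hai : a = (a - Finsupp.single i 1) + Finsupp.single i 1 := by
              refine (tsub_add_cancel_of_le ?_).symm
              rw [Finsupp.single_le_iff]; omega
            have hw := ha
            rw [hai, map_add, Finsupp.weight_single, one_smul] at hw
            by_cases hvB : monomial (a - Finsupp.single i 1) (1 : K) ∈
                B (Finsupp.weight d (a - Finsupp.single i 1))
            · rw [hA', Set.mem_sdiff, not_and, not_not] at haA
              obtain ⟨u, n, j, hu, huB, hn1, hn, hz⟩ := haA ⟨_, _, i, hvB, hw, by
                rw [X, monomial_mul, one_mul, ← hai]⟩
              have hu' := hu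
              rw [hA'] at hu'
              obtain ⟨⟨x, l, j', hx, hl, rfl⟩, -⟩ := hu'
              obtain ⟨b, hb, rfl⟩ := hBmon l x hx
              rw [X, X, monomial_mul, monomial_mul, one_mul, one_mul] at hz
              rw [X, monomial_mul, one_mul] at huB
              refine ⟨b + Finsupp.single j' 1, n, j, ?_, hn, huB,
                monomial_left_injective one_ne_zero hz⟩
              rw [map_add, Finsupp.weight_single, one_smul, hb, hl]
            · exact ⟨_, _, i, rfl, hw, hvB, hai⟩
          obtain ⟨y, hy, hyI⟩ := ih n (by have := hd i; omega) v hv hvB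
          have hyX : ∀ y ∈ Submodule.span K {z | z ∈ B n ∧ lt (monomial v 1) z},
              ∃ y' ∈ Submodule.span K {z | z ∈ B k ∧ lt (monomial a 1) z}, y * X i - y' ∈ I := by
            intro y hy
            induction hy using Submodule.span_induction with
            | zero => exact ⟨0, zero_mem _, by simp⟩
            | add p q _ _ hp hq =>
              obtain ⟨p', hp', hpI⟩ := hp
              obtain ⟨q', hq', hqI⟩ := hq
              refine ⟨p' + q', add_mem hp' hq', ?_⟩
              have := add_mem hpI hqI
              convert this using 1; ring
            | smul c p _ hp =>
              obtain ⟨p', hp', hpI⟩ := hp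
              refine ⟨c • p', Submodule.smul_mem _ _ hp', ?_⟩
              rw [smul_mul_assoc, ← smul_sub, smul_eq_C_mul]
              exact I.mul_mem_left _ hpI
            | mem z hz =>
              obtain ⟨hzB, hvz⟩ := hz
              obtain ⟨b, hb, rfl⟩ := hBmon n z hzB
              have hlt' : lt (monomial a (1 : K)) (monomial (b + Finsupp.single i 1) 1) := by
                rw [hav]; exact hlt_mul _ _ _ hvz
              have hwt : Finsupp.weight d (b + Finsupp.single i 1) = k := by
                rw [map_add, Finsupp.weight_single, one_smul, hb, hn]
              rw [X, monomial_mul, one_mul]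
              by_cases hbB : monomial (b + Finsupp.single i 1) (1 : K) ∈ B k
              · exact ⟨_, Submodule.subset_span ⟨hbB, hlt'⟩, by simp⟩
              · obtain ⟨y', hy', hI'⟩ := ih2 ⟨_, hwt⟩ hlt' hbB
                refine ⟨y', Submodule.span_mono ?_ hy', hI'⟩
                exact fun z hz => ⟨hz.1, hlt_trans _ _ _ hlt' hz.2⟩
          obtain ⟨y', hy', hyI'⟩ := hyX y hy
          refine ⟨y', hy', ?_⟩
          have h1 := add_mem (I.mul_mem_right (X i) hyI) hyI'
          convert h1 using 1
          rw [hav, sub_mul, X, monomial_mul, one_mul]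
          ring
  have hmonφ : ∀ a : Fin m →₀ ℕ, φ (monomial a 1) ∈ 𝒜 (Finsupp.weight d a) := by
    intro a
    induction a using Finsupp.induction_linear with
    | zero => simpa using SetLike.GradedOne.one_mem (A := 𝒜)
    | add a b ha hb =>
      rw [map_add, show monomial (a + b) (1 : K) = monomial a 1 * monomial b 1 by simp [monomial_mul],
        map_mul]
      exact SetLike.mul_mem_graded ha hb
    | single i n =>
      rw [Finsupp.weight_single, ← X_pow_eq_monomial, map_pow, hφ]
      exact SetLike.pow_mem_graded n (hgmem i)
  have hgr : ∀ k, ∀ p ∈ weightedHomogeneousSubmodule K d k, φ p ∈ 𝒜 k := by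
    intro k p hp
    rw [mem_weightedHomogeneousSubmodule] at hp
    rw [p.as_sum, map_sum]
    refine Submodule.sum_mem _ fun a ha => ?_
    have := hp (mem_support_iff.1 ha)
    rw [← this, show monomial a (coeff a p) = coeff a p • monomial a (1 : K) by
      rw [smul_monomial, smul_eq_mul, mul_one], map_smul]
    exact Submodule.smul_mem _ _ (hmonφ a)
  have hred : ∀ k, ∀ p ∈ weightedHomogeneousSubmodule K d k,
      p ∈ Submodule.span K (B k) ⊔ I.restrictScalars K := by
    intro k p hp
    rw [mem_weightedHomogeneousSubmodule] at hp
    rw [p.as_sum]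
    refine Submodule.sum_mem _ fun a ha => ?_
    have hw := hp (mem_support_iff.1 ha)
    rw [show monomial a (coeff a p) = coeff a p • monomial a (1 : K) by
      rw [smul_monomial, smul_eq_mul, mul_one]]
    refine Submodule.smul_mem _ _ ?_
    by_cases haB : monomial a (1 : K) ∈ B k
    · exact Submodule.mem_sup_left (Submodule.subset_span haB)
    · obtain ⟨y, hy, hyI⟩ := main k a hw haB
      exact Submodule.mem_sup.2 ⟨y, Submodule.span_mono (fun z hz => hz.1) hy, _, hyI, by ring⟩
  have hsurj : Function.Surjective φ := by
    rw [← AlgHom.range_eq_top, eq_top_iff, ← hgen, Algebra.adjoin_le_iff]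
    rintro _ ⟨i, rfl⟩
    exact ⟨X i, hφ i⟩
  have hproj : ∀ k p, (DirectSum.decompose 𝒜 (φ p) k : A) =
      φ (weightedHomogeneousComponent d k p) := by
    intro k p
    conv_lhs => rw [← sum_weightedHomogeneousComponent d p]
    rw [finsum_eq_sum _ (weightedHomogeneousComponent_finsupp p), map_sum,
      DirectSum.decompose_sum, DFinsupp.finsetSum_apply, AddSubmonoidClass.coe_finsetSum,
      Finset.sum_eq_single k]
    · exact DirectSum.decompose_of_mem_same 𝒜 (hgr _ _ (weightedHomogeneousComponent_mem d p k))
    · intro j _ hj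
      exact DirectSum.decompose_of_mem_ne 𝒜 (hgr _ _ (weightedHomogeneousComponent_mem d p j)) hj
    · intro h
      have : weightedHomogeneousComponent d k p = 0 := by
        by_contra hne
        exact h ((Set.Finite.mem_toFinset _).2 (Function.mem_support.2 hne))
      simp [this]
  have hinj : ∀ k, ∀ y ∈ Submodule.span K (B k), φ y = 0 → y = 0 := by
    intro k y hy hy0
    have h := (hBli k : LinearIndepOn K φ.toLinearMap (B k))
    obtain ⟨c, hc, rfl⟩ := Submodule.mem_span_set.1 hy
    have := (linearIndepOn_iff.1 h) c hc (by
      rw [Finsupp.linearCombination_apply, ← hy0, Finsupp.sum, Finsupp.sum, map_sum]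
      simp)
    simp [this]
  refine ⟨?_, hsurj, hgr, fun k => ⟨le_antisymm ?_ ?_, hBli k⟩⟩
  · refine le_antisymm (fun p hp => ?_) (fun p hp => hker p hp)
    replace hp : φ p = 0 := hp
    rw [← sum_weightedHomogeneousComponent d p,
      finsum_eq_sum _ (weightedHomogeneousComponent_finsupp p)]
    refine Ideal.sum_mem _ fun k _ => ?_
    have h0 : φ (weightedHomogeneousComponent d k p) = 0 := by
      rw [← hproj, hp]; simp
    obtain ⟨y, hy, z, hz, hyz⟩ := Submodule.mem_sup.1
      (hred k _ (weightedHomogeneousComponent_mem d p k))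
    rw [← hyz, map_add, hker z hz, add_zero] at h0
    rw [← hyz, hinj k y hy h0, zero_add]
    exact hz
  · rw [Submodule.span_le]
    rintro _ ⟨x, hx, rfl⟩
    obtain ⟨a, ha, rfl⟩ := hBmon k x hx
    rw [← ha]; exact hmonφ a
  · intro x hx
    obtain ⟨p, rfl⟩ := hsurj x
    rw [← DirectSum.decompose_of_mem_same 𝒜 hx, hproj]
    obtain ⟨y, hy, z, hz, hyz⟩ := Submodule.mem_sup.1
      (hred k _ (weightedHomogeneousComponent_mem d p k))
    rw [← hyz, map_add, hker z hz, add_zero]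
    have := Submodule.mem_map_of_mem (f := φ.toLinearMap) hy
    rwa [Submodule.map_span] at this
end
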